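/- arXiv:2301.02473 — 12 statements merged into one kernel-verified Lean document; each statement's English description precedes it below -/
import Mathlib

section
/- Let k, c₊, c₋, c₀ be real constants. Suppose x, y : ℝ → ℝ are twice differentiable and satisfy the Newtonian equations of motion for the Toda-type potential V(x,y) = c₊·exp(k(y+√3·x)) + c₋·exp(k(y−√3·x)) + c₀·exp(−2ky), i.e. x''(t) = −∂V/∂x and y''(t) = −∂V/∂y along the solution. Then the cubic function J(t) = x'(t)³ − 3x'(t)y'(t)² + 3[c₊·exp(k(y+√3x)) + c₋·exp(k(y−√3x)) − 2c₀·exp(−2ky)]·x'(t) − 3√3[c₊·exp(k(y+√3x)) − c₋·exp(k(y−√3x))]·y'(t) (evaluated at (x(t),y(t))) is constant in t. -/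
/-!
Identify the plane with `ℂ` and let `V z = ∑ i, c i * exp (k ⟪a i, z⟫)`. For
`J = ‖a‖² Re (v³) + 6 ∑ i, c i * exp (k ⟪a i, z⟫) * Re ((a i)² v)` with all `a i` of the same norm,
the part of `dJ/dt` quadratic in the velocity `v` vanishes because
`2 ⟪a, v⟫ Re (a² v) = ‖a‖² Re (a v²) + ‖v‖² Re (a³)`, as soon as `Re (a³) = 0` for each exponent.
The velocity-free part is a quadratic form in the exponentials whose symmetrised coefficients are
`Re (a i * a j * (a i + a j))`, which includes the condition `Re (a³) = 0` on the diagonal. For the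
Toda potential the exponents `±√3 + i` and `-2i` are the cube roots of `8i`; they have sum `0` and
product `8i`, so `a i * a j * (a i + a j)` is `16i` for `i = j` and `-8i` otherwise.
-/

section Newton

open scoped Gradient

/-- `z` is a solution, with velocity `v`, of Newton's equations for a unit mass in the potential
`V`. As `∇ V` is zero where `V` is not differentiable, this is meant for differentiable `V`. -/
structure IsNewtonianMotion {E : Type*} [NormedAddCommGroup E] [InnerProductSpace ℝ E]
    [CompleteSpace E] (V : E → ℝ) (z v : ℝ → E) : Prop where
  hasDerivAt_position (t : ℝ) : HasDerivAt z (v t) t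
  hasDerivAt_velocity (t : ℝ) : HasDerivAt v (-∇ V (z t)) t

theorem hasDerivAt_complex_mk {x y : ℝ → ℝ} {x' y' t : ℝ} (hx : HasDerivAt x x' t)
    (hy : HasDerivAt y y' t) : HasDerivAt (fun s ↦ (⟨x s, y s⟩ : ℂ)) ⟨x', y'⟩ t := by
  simpa only [Complex.mk_eq_add_mul_I] using!
    hx.ofReal_comp.add (hy.ofReal_comp.mul_const Complex.I)

theorem gradient_eq_complex_mk_deriv {V : ℂ → ℝ} {x y : ℝ} (hV : DifferentiableAt ℝ V ⟨x, y⟩) :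
    ∇ V ⟨x, y⟩ = ⟨deriv (fun a ↦ V ⟨a, y⟩) x, deriv (fun b ↦ V ⟨x, b⟩) y⟩ := by
  have hre : HasDerivAt (fun a ↦ V ⟨a, y⟩) (fderiv ℝ V ⟨x, y⟩ ⟨1, 0⟩) x :=
    hV.hasFDerivAt.comp_hasDerivAt x
      (hasDerivAt_complex_mk (hasDerivAt_id x) (hasDerivAt_const x y))
  have him : HasDerivAt (fun b ↦ V ⟨x, b⟩) (fderiv ℝ V ⟨x, y⟩ ⟨0, 1⟩) y :=
    hV.hasFDerivAt.comp_hasDerivAt y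
      (hasDerivAt_complex_mk (hasDerivAt_const y x) (hasDerivAt_id y))
  rw [hre.deriv, him.deriv, ← inner_gradient_left, ← inner_gradient_left]
  apply Complex.ext <;> simp [Complex.inner, -inner_gradient_left]

theorem isNewtonianMotion_complex_mk {V : ℂ → ℝ} {x y x' y' x'' y'' : ℝ → ℝ}
    (hV : Differentiable ℝ V) (hx : ∀ t, HasDerivAt x (x' t) t) (hy : ∀ t, HasDerivAt y (y' t) t)
    (hx' : ∀ t, HasDerivAt x' (x'' t) t) (hy' : ∀ t, HasDerivAt y' (y'' t) t)
    (hx'' : ∀ t, x'' t = -deriv (fun a ↦ V ⟨a, y t⟩) (x t))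
    (hy'' : ∀ t, y'' t = -deriv (fun b ↦ V ⟨x t, b⟩) (y t)) :
    IsNewtonianMotion V (fun t ↦ ⟨x t, y t⟩) (fun t ↦ ⟨x' t, y' t⟩) where
  hasDerivAt_position t := hasDerivAt_complex_mk (hx t) (hy t)
  hasDerivAt_velocity t := by
    have hforce : -∇ V ⟨x t, y t⟩ = ⟨x'' t, y'' t⟩ := by
      rw [gradient_eq_complex_mk_deriv (hV _), hx'', hy'']
      rfl
    simpa only [hforce] using hasDerivAt_complex_mk (hx' t) (hy' t)

end Newton

section ExpPotential

open scoped RealInnerProductSpace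

variable {ι E : Type*} [NormedAddCommGroup E] [InnerProductSpace ℝ E]

/-- The exponential `c i * exp (k ⟪a i, z⟫)`, the `i`-th summand of `expPotential`. -/
noncomputable def expTerm (k : ℝ) (c : ι → ℝ) (a : ι → E) (i : ι) (z : E) : ℝ :=
  c i * Real.exp (k * ⟪a i, z⟫)

/-- The potential of Toda type with coefficients `c` and exponents `k • a i`. The factor `k` is kept
apart so that the case `k = 0` can be treated together with the others. -/
noncomputable def expPotential [Fintype ι] (k : ℝ) (c : ι → ℝ) (a : ι → E) (z : E) : ℝ :=
  ∑ i, expTerm k c a i z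

theorem hasFDerivAt_expTerm (k : ℝ) (c : ι → ℝ) (a : ι → E) (i : ι) (z : E) :
    HasFDerivAt (expTerm k c a i) ((k * expTerm k c a i z) • innerSL ℝ (a i)) z := by
  have h := (((innerSL ℝ (a i)).hasFDerivAt (x := z)).const_mul k).exp.const_mul (c i)
  refine h.congr_fderiv ?_
  simp only [expTerm, smul_smul, innerSL_apply_apply]
  ring_nf

theorem hasDerivAt_expTerm_comp (k : ℝ) (c : ι → ℝ) (a : ι → E) (i : ι) {z : ℝ → E} {v : E} {t : ℝ}
    (hz : HasDerivAt z v t) :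
    HasDerivAt (fun s ↦ expTerm k c a i (z s)) (k * expTerm k c a i (z t) * ⟪a i, v⟫) t :=
  (hasFDerivAt_expTerm k c a i (z t)).comp_hasDerivAt t hz

theorem hasGradientAt_expPotential [CompleteSpace E] [Fintype ι] (k : ℝ) (c : ι → ℝ) (a : ι → E)
    (z : E) : HasGradientAt (expPotential k c a) (k • ∑ i, expTerm k c a i z • a i) z := by
  have h := HasFDerivAt.fun_sum (u := Finset.univ) fun i _ ↦ hasFDerivAt_expTerm k c a i z
  refine hasGradientAt_iff_hasFDerivAt.2 (h.congr_fderiv ?_)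
  ext w
  simp [Finset.mul_sum, mul_assoc]

end ExpPotential

section CubicIntegral

open scoped RealInnerProductSpace

theorem two_mul_inner_mul_re_sq_mul (a v : ℂ) :
    2 * (⟪a, v⟫ * (a ^ 2 * v).re) = ‖a‖ ^ 2 * (v ^ 2 * a).re + ‖v‖ ^ 2 * (a ^ 3).re := by
  rw [Complex.sq_norm, Complex.sq_norm]
  simp only [Complex.inner, Complex.normSq_apply, pow_succ, pow_zero, one_mul,
    Complex.mul_re, Complex.mul_im, Complex.conj_re, Complex.conj_im]
  ring

variable {ι : Type*} [Fintype ι]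

theorem sum_mul_inner_mul_re_sq_mul {a : ι → ℂ} {r : ℝ} (hnorm : ∀ i, ‖a i‖ = r)
    (hcube : ∀ i, (a i ^ 3).re = 0) (m : ι → ℝ) (v : ℂ) :
    2 * ∑ i, m i * ⟪a i, v⟫ * (a i ^ 2 * v).re = r ^ 2 * (v ^ 2 * ∑ i, m i • a i).re := by
  simp only [Finset.mul_sum, Complex.re_sum]
  refine Finset.sum_congr rfl fun i _ ↦ ?_
  have h := two_mul_inner_mul_re_sq_mul (a i) v
  rw [hcube, hnorm, mul_zero, add_zero] at h
  rw [mul_smul_comm, Complex.smul_re, smul_eq_mul]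
  linear_combination m i * h

theorem sum_mul_re_sq_mul_sum_eq_zero {a : ι → ℂ} (ha : ∀ i j, (a i * a j * (a i + a j)).re = 0)
    (m : ι → ℝ) : ∑ i, m i * (a i ^ 2 * ∑ j, m j • a j).re = 0 := by
  have hexpand : ∑ i, m i * (a i ^ 2 * ∑ j, m j • a j).re =
      ∑ i, ∑ j, m i * m j * (a i ^ 2 * a j).re := by
    simp only [Finset.mul_sum, Complex.re_sum, mul_smul_comm, Complex.smul_re, smul_eq_mul,
      mul_assoc]
  have hswap : ∑ i, ∑ j, m i * m j * (a i ^ 2 * a j).re =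
      -∑ i, ∑ j, m i * m j * (a i ^ 2 * a j).re := by
    conv_lhs => rw [Finset.sum_comm]
    simp only [← Finset.sum_neg_distrib]
    refine Finset.sum_congr rfl fun i _ ↦ Finset.sum_congr rfl fun j _ ↦ ?_
    have hij : (a j ^ 2 * a i).re + (a i ^ 2 * a j).re = 0 := by
      rw [← Complex.add_re, ← ha i j]
      ring_nf
    linear_combination m i * m j * hij
  rw [hexpand]
  exact self_eq_neg.1 hswap

/-- The cubic first integral of a motion in `expPotential k c a` when all exponents `a i` have norm
`r`, as a function of the position `z` and the velocity `v`. It is scaled by `r ^ 2` so that no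
division by `r` is needed. -/
noncomputable def expCubicIntegral (r k : ℝ) (c : ι → ℝ) (a : ι → ℂ) (z v : ℂ) : ℝ :=
  r ^ 2 * (v ^ 3).re + 6 * ∑ i, expTerm k c a i z * (a i ^ 2 * v).re

theorem hasDerivAt_expCubicIntegral_comp (r k : ℝ) (c : ι → ℝ) (a : ι → ℂ) {z v : ℝ → ℂ} {f : ℂ}
    {t : ℝ} (hz : HasDerivAt z (v t) t) (hv : HasDerivAt v f t) :
    HasDerivAt (fun s ↦ expCubicIntegral r k c a (z s) (v s))
      (3 * r ^ 2 * (v t ^ 2 * f).re +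
        6 * (k * ∑ i, expTerm k c a i (z t) * ⟪a i, v t⟫ * (a i ^ 2 * v t).re +
          ∑ i, expTerm k c a i (z t) * (a i ^ 2 * f).re)) t := by
  have hre {g : ℝ → ℂ} {g' : ℂ} (hg : HasDerivAt g g' t) :
      HasDerivAt (fun s ↦ (g s).re) g'.re t :=
    Complex.reCLM.hasFDerivAt.comp_hasDerivAt t hg
  have hcubic : HasDerivAt (fun s ↦ (v s ^ 3).re) (3 * (v t ^ 2 * f).re) t := by
    simpa [mul_assoc] using hre (hv.fun_pow 3)
  have hterm (i : ι) := (hasDerivAt_expTerm_comp k c a i hz).mul (hre (hv.const_mul (a i ^ 2)))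
  refine ((hcubic.const_mul (r ^ 2)).add
    ((HasDerivAt.fun_sum fun i _ ↦ hterm i).const_mul 6)).congr_deriv ?_
  simp only [Finset.sum_add_distrib, Finset.mul_sum, mul_assoc]
  ring

variable {a : ι → ℂ} {r k : ℝ} {c : ι → ℝ} {z v : ℝ → ℂ}

theorem IsNewtonianMotion.hasDerivAt_expCubicIntegral
    (h : IsNewtonianMotion (expPotential k c a) z v) (hnorm : ∀ i, ‖a i‖ = r)
    (ha : ∀ i j, (a i * a j * (a i + a j)).re = 0) (t : ℝ) :
    HasDerivAt (fun s ↦ expCubicIntegral r k c a (z s) (v s)) 0 t := by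
  have hforce := h.hasDerivAt_velocity t
  rw [(hasGradientAt_expPotential k c a (z t)).gradient] at hforce
  have hcube (i : ι) : (a i ^ 3).re = 0 := by
    have hdouble : a i * a i * (a i + a i) = (2 : ℝ) * a i ^ 3 := by
      push_cast
      ring
    simpa [hdouble] using ha i i
  have hquadratic := sum_mul_inner_mul_re_sq_mul hnorm hcube (expTerm k c a · (z t)) (v t)
  have hconstant := sum_mul_re_sq_mul_sum_eq_zero ha (expTerm k c a · (z t))
  refine (hasDerivAt_expCubicIntegral_comp r k c a (h.hasDerivAt_position t) hforce).congr_deriv ?_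
  simp only [mul_neg, mul_smul_comm, Complex.neg_re, Complex.smul_re, smul_eq_mul,
    Finset.sum_neg_distrib, mul_left_comm _ k, ← Finset.mul_sum, hconstant]
  linear_combination 3 * k * hquadratic

theorem IsNewtonianMotion.expCubicIntegral_eq
    (h : IsNewtonianMotion (expPotential k c a) z v) (hnorm : ∀ i, ‖a i‖ = r)
    (ha : ∀ i j, (a i * a j * (a i + a j)).re = 0) (t₁ t₂ : ℝ) :
    expCubicIntegral r k c a (z t₁) (v t₁) = expCubicIntegral r k c a (z t₂) (v t₂) :=
  is_const_of_deriv_eq_zero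
    (fun t ↦ (h.hasDerivAt_expCubicIntegral hnorm ha t).differentiableAt)
    (fun t ↦ (h.hasDerivAt_expCubicIntegral hnorm ha t).deriv) t₁ t₂

end CubicIntegral

section TodaExponents

/-- The exponents of the planar Toda potential, in the order of its coefficients `c₊, c₋, c₀`. -/
noncomputable def todaExponents : Fin 3 → ℂ :=
  ![⟨√3, 1⟩, ⟨-√3, 1⟩, ⟨0, -2⟩]

theorem norm_todaExponents (i : Fin 3) : ‖todaExponents i‖ = 2 := by
  rw [← sq_eq_sq₀ (norm_nonneg _) zero_le_two, Complex.sq_norm]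
  fin_cases i <;> norm_num [todaExponents, Complex.normSq_apply]

theorem re_todaExponents_mul_mul_add (i j : Fin 3) :
    (todaExponents i * todaExponents j * (todaExponents i + todaExponents j)).re = 0 := by
  fin_cases i <;> fin_cases j <;> simp [todaExponents] <;> ring

theorem expTerm_todaExponents (k cp cm c0 x y : ℝ) (i : Fin 3) :
    expTerm k ![cp, cm, c0] todaExponents i ⟨x, y⟩ =
      ![cp * Real.exp (k * (y + √3 * x)), cm * Real.exp (k * (y - √3 * x)),
        c0 * Real.exp (-2 * k * y)] i := by
  fin_cases i <;>
    simp [expTerm, todaExponents, Complex.inner, -mul_eq_mul_left_iff] <;> ring_nf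

theorem expPotential_todaExponents (k cp cm c0 x y : ℝ) :
    expPotential k ![cp, cm, c0] todaExponents ⟨x, y⟩ =
      cp * Real.exp (k * (y + √3 * x)) + cm * Real.exp (k * (y - √3 * x)) +
        c0 * Real.exp (-2 * k * y) := by
  simp only [expPotential, expTerm_todaExponents, Fin.sum_univ_three, Matrix.cons_val]

theorem re_todaExponents_sq_mul (x y : ℝ) (i : Fin 3) :
    (todaExponents i ^ 2 * (⟨x, y⟩ : ℂ)).re = ![2 * (x - √3 * y), 2 * (x + √3 * y), -4 * x] i := by
  fin_cases i <;> simp [todaExponents, sq, -mul_eq_mul_right_iff] <;> ring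

theorem expCubicIntegral_todaExponents (k cp cm c0 x y x' y' : ℝ) :
    expCubicIntegral 2 k ![cp, cm, c0] todaExponents ⟨x, y⟩ ⟨x', y'⟩ =
      4 * (x' ^ 3 - 3 * x' * y' ^ 2 +
        3 * (cp * Real.exp (k * (y + √3 * x)) + cm * Real.exp (k * (y - √3 * x)) -
          2 * c0 * Real.exp (-2 * k * y)) * x' -
        3 * √3 * (cp * Real.exp (k * (y + √3 * x)) - cm * Real.exp (k * (y - √3 * x))) * y') := by
  have hcube : ((⟨x', y'⟩ : ℂ) ^ 3).re = x' ^ 3 - 3 * x' * y' ^ 2 := by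
    simp only [pow_succ, pow_zero, one_mul, Complex.mul_re, Complex.mul_im]
    ring
  simp only [expCubicIntegral, hcube, expTerm_todaExponents, re_todaExponents_sq_mul,
    Fin.sum_univ_three, Matrix.cons_val]
  ring

end TodaExponents

/-- Toda-type potential: the cubic expression is a first integral. -/
theorem stmt_0 (k cp cm c0 : ℝ) (x y x' y' x'' y'' : ℝ → ℝ) (V : ℝ → ℝ → ℝ) (J : ℝ → ℝ)
    (hV : ∀ a b : ℝ, V a b =
      cp * Real.exp (k * (b + Real.sqrt 3 * a)) +
      cm * Real.exp (k * (b - Real.sqrt 3 * a)) +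
      c0 * Real.exp (-2 * k * b))
    (hx : ∀ t, HasDerivAt x (x' t) t)
    (hy : ∀ t, HasDerivAt y (y' t) t)
    (hx' : ∀ t, HasDerivAt x' (x'' t) t)
    (hy' : ∀ t, HasDerivAt y' (y'' t) t)
    (heqx : ∀ t, x'' t = - deriv (fun a => V a (y t)) (x t))
    (heqy : ∀ t, y'' t = - deriv (fun b => V (x t) b) (y t))
    (hJ : ∀ t, J t =
      x' t ^ 3 - 3 * x' t * y' t ^ 2 +
      3 * (cp * Real.exp (k * (y t + Real.sqrt 3 * x t)) +
           cm * Real.exp (k * (y t - Real.sqrt 3 * x t)) -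
           2 * c0 * Real.exp (-2 * k * y t)) * x' t -
      3 * Real.sqrt 3 * (cp * Real.exp (k * (y t + Real.sqrt 3 * x t)) -
           cm * Real.exp (k * (y t - Real.sqrt 3 * x t))) * y' t) :
    ∀ t₁ t₂ : ℝ, J t₁ = J t₂ := by
  obtain rfl : V = fun a b ↦ expPotential k ![cp, cm, c0] todaExponents ⟨a, b⟩ := by
    ext a b
    rw [hV, expPotential_todaExponents]
  have hmotion := isNewtonianMotion_complex_mk
    (fun z ↦ (hasGradientAt_expPotential k ![cp, cm, c0] todaExponents z).differentiableAt)
    hx hy hx' hy' heqx heqy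
  have hJ' (t : ℝ) :
      expCubicIntegral 2 k ![cp, cm, c0] todaExponents ⟨x t, y t⟩ ⟨x' t, y' t⟩ = 4 * J t := by
    rw [hJ, expCubicIntegral_todaExponents]
  intro t₁ t₂
  have hconst :=
    hmotion.expCubicIntegral_eq norm_todaExponents re_todaExponents_mul_mul_add t₁ t₂
  simpa only [hJ', mul_right_inj' (four_ne_zero' ℝ)] using hconst
end

section
/- Let F₁, F₂, F₃ : ℝ → ℝ be differentiable functions satisfying the cyclic condition F₁'(w₁)·(F₂(w₂) − F₃(w₃)) + F₂'(w₂)·(F₃(w₃) − F₁(w₁)) + F₃'(w₃)·(F₁(w₁) − F₂(w₂)) = 0 for all (x,y) ∈ ℝ², where w₁ = y + √3·x, w₂ = y − √3·x, w₃ = −2y. Suppose x, y : ℝ → ℝ are twice differentiable and satisfy the Newtonian equations of motion for the potential V(x,y) = F₁(y+√3x) + F₂(y−√3x) + F₃(−2y). Then the cubic function J(t) = x'³ − 3x'y'² + 3[F₁(y+√3x) + F₂(y−√3x) − 2F₃(−2y)]·x' − 3√3[F₁(y+√3x) − F₂(y−√3x)]·y' is constant in t. -/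
/-!
The plane carries the relative motion of three equal particles on a line, for which `F₁`, `F₂`, `F₃`
are the pair potentials and `y + √3 x`, `y - √3 x`, `-2 y` the separations. Up to a constant factor,
the cubic function is `v₁ v₂ v₃ - κ (v₁ F₁ + v₂ F₂ + v₃ F₃)`, where `κ = 2` is the inverse mass.
Along a motion the terms of its derivative that are quadratic in the velocities cancel, and what
remains is `κ²` times the cyclic expression.
-/

/-- The cyclic differences `(u₁ - u₂, u₂ - u₀, u₀ - u₁)` of a triple; indices are added in `Fin 3`,
that is modulo `3`. Applied to the positions of three particles on a line it gives their
separations, and applied to the derivatives of the pair potentials it gives the forces. -/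
def cyclicDiff {R : Type*} [Sub R] (u : Fin 3 → R) (i : Fin 3) : R :=
  u (i + 1) - u (i + 2)

/-- The cubic integral of three particles of inverse mass `κ` on a line, as a function of the
values `f` of the pair potentials and of the velocities `v`; `f i` belongs to the pair of particles
other than `i`. -/
def threeParticleCubic {R : Type*} [CommRing R] (κ : R) (f v : Fin 3 → R) : R :=
  v 0 * v 1 * v 2 - κ * ∑ i, v i * f i

section ThreeParticles

variable {𝕜 : Type*} [NontriviallyNormedField 𝕜]

theorem hasDerivAt_comp_cyclicDiff {F : Fin 3 → 𝕜 → 𝕜} {q : 𝕜 → Fin 3 → 𝕜}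
    {d v : Fin 3 → 𝕜} {t : 𝕜}
    (hF : ∀ i, HasDerivAt (F i) (d i) (cyclicDiff (q t) i)) (hq : HasDerivAt q v t) :
    HasDerivAt (fun s i => F i (cyclicDiff (q s) i)) (fun i => d i * cyclicDiff v i) t :=
  hasDerivAt_pi.2 fun i =>
    (hF i).comp t ((hasDerivAt_pi.1 hq (i + 1)).sub (hasDerivAt_pi.1 hq (i + 2)))

theorem hasDerivAt_threeParticleCubic {κ t : 𝕜} {f v : 𝕜 → Fin 3 → 𝕜} {d : Fin 3 → 𝕜}
    (hf : HasDerivAt f (fun i => d i * cyclicDiff (v t) i) t)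
    (hv : HasDerivAt v (fun i => κ * cyclicDiff d i) t) :
    HasDerivAt (fun s => threeParticleCubic κ (f s) (v s))
      (κ ^ 2 * ∑ i, d i * cyclicDiff (f t) i) t := by
  have hfi := hasDerivAt_pi.1 hf
  have hvi := hasDerivAt_pi.1 hv
  have hprod := ((hvi 0).mul (hvi 1)).mul (hvi 2)
  have hsum := HasDerivAt.fun_sum fun i (_ : i ∈ Finset.univ) => (hvi i).mul (hfi i)
  refine (hprod.sub (hsum.const_mul κ)).congr_deriv ?_
  simp only [Pi.mul_apply, Fin.sum_univ_three, cyclicDiff, Fin.reduceAdd]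
  ring

end ThreeParticles

theorem threeParticleCubic_eq_of_cyclic {𝕜 : Type*} [RCLike 𝕜] {κ : 𝕜} {F F' : Fin 3 → 𝕜 → 𝕜}
    {q v : 𝕜 → Fin 3 → 𝕜} (hF : ∀ i w, HasDerivAt (F i) (F' i w) w)
    (hq : ∀ t, HasDerivAt q (v t) t)
    (hv : ∀ t, HasDerivAt v
      (fun i => κ * cyclicDiff (fun j => F' j (cyclicDiff (q t) j)) i) t)
    (hcyc : ∀ t, ∑ i, F' i (cyclicDiff (q t) i) *
      cyclicDiff (fun j => F j (cyclicDiff (q t) j)) i = 0) (t₁ t₂ : 𝕜) :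
    threeParticleCubic κ (fun i => F i (cyclicDiff (q t₁) i)) (v t₁) =
      threeParticleCubic κ (fun i => F i (cyclicDiff (q t₂) i)) (v t₂) := by
  have hderiv (t : 𝕜) :
      HasDerivAt (fun s => threeParticleCubic κ (fun i => F i (cyclicDiff (q s) i)) (v s)) 0 t := by
    simpa only [hcyc t, mul_zero] using hasDerivAt_threeParticleCubic
      (hasDerivAt_comp_cyclicDiff (fun i => hF i _) (hq t)) (hv t)
  exact is_const_of_deriv_eq_zero (fun t => (hderiv t).differentiableAt)
    (fun t => (hderiv t).deriv) t₁ t₂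

section PlanarPotential

/-- The potential in the plane obtained from functions of one variable along three directions that
are symmetric under `a ↦ -a`. For `s = √3` and `c = -2` it is the relative potential of three
particles on a line. -/
def planarPotential {R : Type*} [Ring R] (F₁ F₂ F₃ : R → R) (s c a b : R) : R :=
  F₁ (b + s * a) + F₂ (b - s * a) + F₃ (c * b)

variable {𝕜 : Type*} [NontriviallyNormedField 𝕜] {F₁ F₂ F₃ : 𝕜 → 𝕜} {s c a b d₁ d₂ d₃ : 𝕜}

theorem hasDerivAt_planarPotential_fst (h₁ : HasDerivAt F₁ d₁ (b + s * a))
    (h₂ : HasDerivAt F₂ d₂ (b - s * a)) :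
    HasDerivAt (fun a => planarPotential F₁ F₂ F₃ s c a b) (s * (d₁ - d₂)) a := by
  have hlin : HasDerivAt (fun a => s * a) s a := hasDerivAt_const_mul s
  have h₁' := h₁.comp a (hlin.const_add b)
  have h₂' := h₂.comp a (hlin.const_sub b)
  exact ((h₁'.add h₂').add_const (F₃ (c * b))).congr_deriv (by ring)

theorem hasDerivAt_planarPotential_snd (h₁ : HasDerivAt F₁ d₁ (b + s * a))
    (h₂ : HasDerivAt F₂ d₂ (b - s * a)) (h₃ : HasDerivAt F₃ d₃ (c * b)) :
    HasDerivAt (fun b => planarPotential F₁ F₂ F₃ s c a b) (d₁ + d₂ + c * d₃) b := by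
  have h₃' := h₃.comp b (hasDerivAt_const_mul c)
  exact (((h₁.comp_add_const b (s * a)).add (h₂.comp_sub_const b (s * a))).add h₃').congr_deriv
    (by ring)

end PlanarPotential

section PlanarCoordinates

/-- The positions, with centre of mass at the origin, of the three particles on a line whose
separations are `b + √3 * a`, `b - √3 * a` and `-2 * b`. It is linear in `(a, b)`, so it
also transforms velocities and accelerations. -/
noncomputable def planarToLine (a b : ℝ) : Fin 3 → ℝ :=
  ![√3 / 3 * a - b, √3 / 3 * a + b, -(2 * √3 / 3) * a]

theorem cyclicDiff_planarToLine (a b : ℝ) :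
    cyclicDiff (planarToLine a b) = ![b + √3 * a, b - √3 * a, -2 * b] := by
  ext i
  fin_cases i <;> simp only [cyclicDiff, planarToLine, Fin.zero_eta, Fin.mk_one, Fin.reduceFinMk,
    Fin.reduceAdd, zero_add, Matrix.cons_val] <;> ring

theorem hasDerivAt_planarToLine {x y : ℝ → ℝ} {x' y' t : ℝ} (hx : HasDerivAt x x' t)
    (hy : HasDerivAt y y' t) :
    HasDerivAt (fun s => planarToLine (x s) (y s)) (planarToLine x' y') t := by
  refine hasDerivAt_pi.2 fun i => ?_
  fin_cases i
  · exact (hx.const_mul (√3 / 3)).sub hy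
  · exact (hx.const_mul (√3 / 3)).add hy
  · exact hx.const_mul (-(2 * √3 / 3))

theorem planarToLine_neg_gradient {F : Fin 3 → ℝ → ℝ} {d : Fin 3 → ℝ} {a b : ℝ}
    (hF : ∀ i, HasDerivAt (F i) (d i) (cyclicDiff (planarToLine a b) i)) :
    planarToLine (-deriv (fun a => planarPotential (F 0) (F 1) (F 2) √3 (-2) a b) a)
      (-deriv (fun b => planarPotential (F 0) (F 1) (F 2) √3 (-2) a b) b) =
      fun i => 2 * cyclicDiff d i := by
  have h3 : √3 ^ 2 = 3 := Real.sq_sqrt zero_le_three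
  rw [cyclicDiff_planarToLine] at hF
  rw [(hasDerivAt_planarPotential_fst (hF 0) (hF 1)).deriv,
    (hasDerivAt_planarPotential_snd (hF 0) (hF 1) (hF 2)).deriv]
  ext i
  fin_cases i <;> simp only [cyclicDiff, planarToLine, Fin.zero_eta, Fin.mk_one, Fin.reduceFinMk,
    Fin.reduceAdd, zero_add, Matrix.cons_val]
  · linear_combination (-(d 0 - d 1) / 3) * h3
  · linear_combination (-(d 0 - d 1) / 3) * h3
  · linear_combination (2 * (d 0 - d 1) / 3) * h3

theorem threeParticleCubic_planarToLine (f : Fin 3 → ℝ) (a b : ℝ) :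
    -(3 * √3 / 2) * threeParticleCubic 2 f (planarToLine a b) =
      a ^ 3 - 3 * a * b ^ 2 + 3 * (f 0 + f 1 - 2 * f 2) * a - 3 * √3 * (f 0 - f 1) * b := by
  have h3 : √3 ^ 2 = 3 := Real.sq_sqrt zero_le_three
  simp only [threeParticleCubic, planarToLine, Fin.sum_univ_three, Matrix.cons_val]
  linear_combination ((√3 ^ 2 + 3) / 9 * a ^ 3 - a * b ^ 2 + (f 0 + f 1 - 2 * f 2) * a) * h3

end PlanarCoordinates

/-- General three-particle Toda-type potential with the cyclic condition:
the cubic expression is a first integral. -/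
theorem stmt_1 (F₁ F₂ F₃ F₁' F₂' F₃' : ℝ → ℝ)
    (hF₁ : ∀ w, HasDerivAt F₁ (F₁' w) w)
    (hF₂ : ∀ w, HasDerivAt F₂ (F₂' w) w)
    (hF₃ : ∀ w, HasDerivAt F₃ (F₃' w) w)
    (hcyc : ∀ a b : ℝ,
      F₁' (b + Real.sqrt 3 * a) * (F₂ (b - Real.sqrt 3 * a) - F₃ (-2 * b)) +
      F₂' (b - Real.sqrt 3 * a) * (F₃ (-2 * b) - F₁ (b + Real.sqrt 3 * a)) +
      F₃' (-2 * b) * (F₁ (b + Real.sqrt 3 * a) - F₂ (b - Real.sqrt 3 * a)) = 0)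
    (x y x' y' x'' y'' : ℝ → ℝ) (V : ℝ → ℝ → ℝ) (J : ℝ → ℝ)
    (hV : ∀ a b : ℝ, V a b =
      F₁ (b + Real.sqrt 3 * a) + F₂ (b - Real.sqrt 3 * a) + F₃ (-2 * b))
    (hx : ∀ t, HasDerivAt x (x' t) t)
    (hy : ∀ t, HasDerivAt y (y' t) t)
    (hx' : ∀ t, HasDerivAt x' (x'' t) t)
    (hy' : ∀ t, HasDerivAt y' (y'' t) t)
    (heqx : ∀ t, x'' t = - deriv (fun a => V a (y t)) (x t))
    (heqy : ∀ t, y'' t = - deriv (fun b => V (x t) b) (y t))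
    (hJ : ∀ t, J t =
      x' t ^ 3 - 3 * x' t * y' t ^ 2 +
      3 * (F₁ (y t + Real.sqrt 3 * x t) + F₂ (y t - Real.sqrt 3 * x t) -
           2 * F₃ (-2 * y t)) * x' t -
      3 * Real.sqrt 3 * (F₁ (y t + Real.sqrt 3 * x t) -
           F₂ (y t - Real.sqrt 3 * x t)) * y' t) :
    ∀ t₁ t₂ : ℝ, J t₁ = J t₂ := by
  have hVe : V = planarPotential F₁ F₂ F₃ √3 (-2) := funext₂ hV
  have hF : ∀ i w, HasDerivAt (![F₁, F₂, F₃] i) (![F₁', F₂', F₃'] i w) w := by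
    simp [Fin.forall_fin_succ, hF₁, hF₂, hF₃]
  have hvel (t : ℝ) : HasDerivAt (fun s => planarToLine (x' s) (y' s))
      (fun i => 2 * cyclicDiff
        (fun j => ![F₁', F₂', F₃'] j (cyclicDiff (planarToLine (x t) (y t)) j)) i) t := by
    refine (hasDerivAt_planarToLine (hx' t) (hy' t)).congr_deriv ?_
    rw [heqx, heqy, hVe]
    exact planarToLine_neg_gradient (F := ![F₁, F₂, F₃]) fun i => hF i _
  have hcubic (t : ℝ) : J t = -(3 * √3 / 2) * threeParticleCubic 2
      (fun i => ![F₁, F₂, F₃] i (cyclicDiff (planarToLine (x t) (y t)) i))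
      (planarToLine (x' t) (y' t)) := by
    rw [threeParticleCubic_planarToLine, cyclicDiff_planarToLine]
    exact hJ t
  have hcyclic (t : ℝ) : ∑ i, ![F₁', F₂', F₃'] i (cyclicDiff (planarToLine (x t) (y t)) i) *
      cyclicDiff (fun j => ![F₁, F₂, F₃] j (cyclicDiff (planarToLine (x t) (y t)) j)) i = 0 := by
    rw [cyclicDiff_planarToLine, Fin.sum_univ_three]
    exact hcyc (x t) (y t)
  intro t₁ t₂
  rw [hcubic, hcubic, threeParticleCubic_eq_of_cyclic hF
    (fun t => hasDerivAt_planarToLine (hx t) (hy t)) hvel hcyclic]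
end

section
/- Let c₁, c₂, c₃ be real constants. Suppose x, y : ℝ → ℝ are twice differentiable with y(t) > 0 for all t, and satisfy the Newtonian equations of motion for the potential V(x,y) = ((4/3)c₁x² + c₂x + c₃)·y^{−2/3} + c₁·y^{4/3}. Then the cubic function J(t) = x'³ + (3/2)x'y'² + [(4c₁x² + 3c₂x + 3c₃)·y^{−2/3} − 6c₁·y^{4/3}]·x' + (12c₁x + (9/2)c₂)·y^{1/3}·y' is constant in t. -/
/-!
Along a motion `q'' = F(q)`, the derivative of `K(q)(q', q', q') + B(q)(q')` is a polynomial in the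
velocity with terms of degree 4, 2 and 0 only; if each of the three vanishes identically, the
quantity is conserved.

The potential is `V = p(x) y^(-2/3) + c y^(4/3)` with `p` quadratic and `p'' = (8/3) c`. For
`K(v, v, v) = v₁³ + (3/2) v₁ v₂²` and `B = (3 p y^(-2/3) - 6 c y^(4/3)) dx + (9/2) p' y^(1/3) dy`,
the degree 2 equations are `∂B₁/∂x = 3 ∂V/∂x`, `∂B₁/∂y + ∂B₂/∂x = 3 ∂V/∂y` and
`∂B₂/∂y = (3/2) ∂V/∂x`. Only the mixed one involves `p''`, and it forces `(9/2) p'' = 12 c`.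
-/

-- Finds the instances on `E →L[ℝ] E →L[ℝ] E →L[ℝ] ℝ`, on which the search fails by default.
set_option maxSynthPendingDepth 3

open ContinuousLinearMap (fst snd smulRight)

section CubicIntegral

variable {E : Type*} [NormedAddCommGroup E] [NormedSpace ℝ E]

/-- The function on phase space which is the sum of a cubic form `K q` and a linear form `B q` in
the velocity `v`. The trilinear form `K q` need not be symmetric. -/
noncomputable def cubicIntegral (K : E → E →L[ℝ] E →L[ℝ] E →L[ℝ] ℝ) (B : E → E →L[ℝ] ℝ)
    (q v : E) : ℝ :=
  K q v v v + B q v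

/-- The determining equations at the point `q` for `cubicIntegral K B` to be a first integral of
`q'' = F q`: the terms of degree 4, 2 and 0 in the velocity of its time derivative vanish. -/
structure CubicDeterminingEquationsAt (K : E → E →L[ℝ] E →L[ℝ] E →L[ℝ] ℝ) (B : E → E →L[ℝ] ℝ)
    (F : E → E) (q : E) : Prop where
  differentiableAt_cubic : DifferentiableAt ℝ K q
  differentiableAt_linear : DifferentiableAt ℝ B q
  degree_four : ∀ v, fderiv ℝ K q v v v v = 0
  degree_two : ∀ v, fderiv ℝ B q v v + (K q (F q) v v + K q v (F q) v + K q v v (F q)) = 0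
  degree_zero : B q (F q) = 0

variable {K : E → E →L[ℝ] E →L[ℝ] E →L[ℝ] ℝ} {B : E → E →L[ℝ] ℝ} {q v : ℝ → E}

theorem hasDerivAt_cubicIntegral {t : ℝ} {a : E} (hK : DifferentiableAt ℝ K (q t))
    (hB : DifferentiableAt ℝ B (q t)) (hq : HasDerivAt q (v t) t) (hv : HasDerivAt v a t) :
    HasDerivAt (fun s => cubicIntegral K B (q s) (v s))
      (fderiv ℝ K (q t) (v t) (v t) (v t) (v t) +
        (fderiv ℝ B (q t) (v t) (v t) +
          (K (q t) a (v t) (v t) + K (q t) (v t) a (v t) + K (q t) (v t) (v t) a)) +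
        B (q t) a) t := by
  have hKq := hK.hasFDerivAt.comp_hasDerivAt t hq
  have hBq := hB.hasFDerivAt.comp_hasDerivAt t hq
  refine ((((hKq.clm_apply hv).clm_apply hv).clm_apply hv).add (hBq.clm_apply hv)).congr_deriv ?_
  simp only [Function.comp_apply, add_apply]
  ring

theorem CubicDeterminingEquationsAt.cubicIntegral_eq {F : E → E}
    (h : ∀ t, CubicDeterminingEquationsAt K B F (q t))
    (hq : ∀ t, HasDerivAt q (v t) t) (hv : ∀ t, HasDerivAt v (F (q t)) t) (t₁ t₂ : ℝ) :
    cubicIntegral K B (q t₁) (v t₁) = cubicIntegral K B (q t₂) (v t₂) := by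
  have hderiv (t : ℝ) : HasDerivAt (fun s => cubicIntegral K B (q s) (v s)) 0 t := by
    refine (hasDerivAt_cubicIntegral (h t).differentiableAt_cubic (h t).differentiableAt_linear
      (hq t) (hv t)).congr_deriv ?_
    rw [(h t).degree_four, (h t).degree_two, (h t).degree_zero, add_zero, add_zero]
  exact is_const_of_deriv_eq_zero (fun t => (hderiv t).differentiableAt)
    (fun t => (hderiv t).deriv) t₁ t₂

end CubicIntegral

theorem hasFDerivAt_fst_mul_snd_rpow {f : ℝ → ℝ} {f' : ℝ} {q : ℝ × ℝ} (hf : HasDerivAt f f' q.1)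
    (hq : q.2 ≠ 0) (r : ℝ) :
    HasFDerivAt (fun z : ℝ × ℝ => f z.1 * z.2 ^ r)
      ((f' * q.2 ^ r) • fst ℝ ℝ ℝ + (f q.1 * (r * q.2 ^ (r - 1))) • snd ℝ ℝ ℝ) q := by
  have hfst := hf.comp_hasFDerivAt q (fst ℝ ℝ ℝ).hasFDerivAt
  have hsnd := (Real.hasDerivAt_rpow_const (p := r) (.inl hq)).comp_hasFDerivAt q
    (snd ℝ ℝ ℝ).hasFDerivAt
  refine (hfst.mul hsnd).congr_fderiv ?_
  ext <;> simp [mul_comm]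

section Holt

variable (p p' : ℝ → ℝ) (c : ℝ)

/-- The Holt-type potential with profile `p` in the first coordinate. -/
noncomputable def holtPotential (a b : ℝ) : ℝ :=
  p a * b ^ (-(2 : ℝ) / 3) + c * b ^ ((4 : ℝ) / 3)

/-- The force field `-∇V` of `V = holtPotential p c`, where `p'` is the derivative of `p`. -/
noncomputable def holtForce (q : ℝ × ℝ) : ℝ × ℝ :=
  (-(p' q.1 * q.2 ^ (-(2 : ℝ) / 3)),
    -(p q.1 * (-(2 : ℝ) / 3 * q.2 ^ (-(5 : ℝ) / 3)) + c * (4 / 3 * q.2 ^ ((1 : ℝ) / 3))))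

/-- The leading part `v₁³ + (3/2) v₁ v₂²` of the Holt first integral, as a trilinear form. -/
noncomputable def holtCubic : ℝ × ℝ →L[ℝ] ℝ × ℝ →L[ℝ] ℝ × ℝ →L[ℝ] ℝ :=
  smulRight (fst ℝ ℝ ℝ) (smulRight (fst ℝ ℝ ℝ) (fst ℝ ℝ ℝ)) +
    (3 / 2 : ℝ) • smulRight (fst ℝ ℝ ℝ) (smulRight (snd ℝ ℝ ℝ) (snd ℝ ℝ ℝ))

/-- The part of the Holt first integral that is linear in the velocity, as a one-form on the
plane; `p'` is the derivative of `p`. -/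
noncomputable def holtLinear (q : ℝ × ℝ) : ℝ × ℝ →L[ℝ] ℝ :=
  (3 * (p q.1 * q.2 ^ (-(2 : ℝ) / 3)) - 6 * (c * q.2 ^ ((4 : ℝ) / 3))) • fst ℝ ℝ ℝ +
    (9 / 2 * (p' q.1 * q.2 ^ ((1 : ℝ) / 3))) • snd ℝ ℝ ℝ

theorem holtCubic_apply (u v w : ℝ × ℝ) :
    holtCubic u v w = u.1 * v.1 * w.1 + 3 / 2 * (u.1 * v.2 * w.2) := by
  simp [holtCubic, mul_assoc]

theorem holtLinear_apply (q v : ℝ × ℝ) :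
    holtLinear p p' c q v =
      (3 * (p q.1 * q.2 ^ (-(2 : ℝ) / 3)) - 6 * (c * q.2 ^ ((4 : ℝ) / 3))) * v.1 +
        9 / 2 * (p' q.1 * q.2 ^ ((1 : ℝ) / 3)) * v.2 := by
  simp [holtLinear]

variable {p p' c}

theorem hasDerivAt_holtPotential_left {a : ℝ} (hp : HasDerivAt p (p' a) a) (b : ℝ) :
    HasDerivAt (fun z => holtPotential p c z b) (-(holtForce p p' c (a, b)).1) a := by
  refine ((hp.mul_const _).add_const _).congr_deriv ?_
  rw [holtForce, neg_neg]

theorem hasDerivAt_holtPotential_right (a : ℝ) {b : ℝ} (hb : b ≠ 0) :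
    HasDerivAt (holtPotential p c a) (-(holtForce p p' c (a, b)).2) b := by
  have hpow (r : ℝ) : HasDerivAt (fun z : ℝ => z ^ r) (r * b ^ (r - 1)) b :=
    Real.hasDerivAt_rpow_const (.inl hb)
  refine (((hpow _).const_mul (p a)).add ((hpow _).const_mul c)).congr_deriv ?_
  norm_num [holtForce]

theorem hasFDerivAt_holtLinear {q : ℝ × ℝ} {p'' : ℝ} (hp : HasDerivAt p (p' q.1) q.1)
    (hp' : HasDerivAt p' p'' q.1) (hq : q.2 ≠ 0) :
    HasFDerivAt (holtLinear p p' c)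
      (smulRight
          ((3 * (p' q.1 * q.2 ^ (-(2 : ℝ) / 3))) • fst ℝ ℝ ℝ -
            (2 * (p q.1 * q.2 ^ (-(5 : ℝ) / 3)) + 8 * (c * q.2 ^ ((1 : ℝ) / 3))) • snd ℝ ℝ ℝ)
          (fst ℝ ℝ ℝ) +
        smulRight
          ((9 / 2 * (p'' * q.2 ^ ((1 : ℝ) / 3))) • fst ℝ ℝ ℝ +
            (3 / 2 * (p' q.1 * q.2 ^ (-(2 : ℝ) / 3))) • snd ℝ ℝ ℝ)
          (snd ℝ ℝ ℝ)) q := by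
  have hpy := hasFDerivAt_fst_mul_snd_rpow hp hq (-(2 : ℝ) / 3)
  have hcy := hasFDerivAt_fst_mul_snd_rpow (hasDerivAt_const q.1 c) hq ((4 : ℝ) / 3)
  have hp'y := hasFDerivAt_fst_mul_snd_rpow hp' hq ((1 : ℝ) / 3)
  refine ((((hpy.const_mul 3).sub (hcy.const_mul 6)).smul_const (fst ℝ ℝ ℝ)).add
    ((hp'y.const_mul (9 / 2)).smul_const (snd ℝ ℝ ℝ))).congr_fderiv ?_
  have exp_neg : -(2 : ℝ) / 3 - 1 = -(5 : ℝ) / 3 := by norm_num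
  have exp_four : (4 : ℝ) / 3 - 1 = 1 / 3 := by norm_num
  have exp_one : (1 : ℝ) / 3 - 1 = -(2 : ℝ) / 3 := by norm_num
  rw [exp_neg, exp_four, exp_one]
  congr 2 <;> module

theorem holtLinear_holtForce {q : ℝ × ℝ} (hq : 0 < q.2) :
    holtLinear p p' c q (holtForce p p' c q) = 0 := by
  have hneg : q.2 ^ (-(2 : ℝ) / 3) * q.2 ^ (-(2 : ℝ) / 3) =
      q.2 ^ (-(5 : ℝ) / 3) * q.2 ^ ((1 : ℝ) / 3) := by
    rw [← Real.rpow_add hq, ← Real.rpow_add hq]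
    norm_num
  have hpos : q.2 ^ ((4 : ℝ) / 3) * q.2 ^ (-(2 : ℝ) / 3) =
      q.2 ^ ((1 : ℝ) / 3) * q.2 ^ ((1 : ℝ) / 3) := by
    rw [← Real.rpow_add hq, ← Real.rpow_add hq]
    norm_num
  rw [holtLinear_apply, holtForce]
  linear_combination (-3 * p q.1 * p' q.1) * hneg + (6 * c * p' q.1) * hpos

theorem holt_cubicDeterminingEquationsAt {q : ℝ × ℝ} (hp : HasDerivAt p (p' q.1) q.1)
    (hp' : HasDerivAt p' (8 / 3 * c) q.1) (hq : 0 < q.2) :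
    CubicDeterminingEquationsAt (fun _ => holtCubic) (holtLinear p p' c) (holtForce p p' c) q where
  differentiableAt_cubic := differentiableAt_const _
  differentiableAt_linear := (hasFDerivAt_holtLinear hp hp' hq.ne').differentiableAt
  degree_four v := by simp
  degree_two v := by
    rw [(hasFDerivAt_holtLinear hp hp' hq.ne').fderiv]
    simp only [holtCubic_apply, holtForce, add_apply, sub_apply, smul_apply, smul_eq_mul,
      ContinuousLinearMap.smulRight_apply, ContinuousLinearMap.coe_fst',
      ContinuousLinearMap.coe_snd']
    ring
  degree_zero := holtLinear_holtForce hq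

end Holt

/-- Holt-type potential: the cubic expression is a first integral. -/
theorem stmt_2 (c₁ c₂ c₃ : ℝ) (x y x' y' x'' y'' : ℝ → ℝ) (V : ℝ → ℝ → ℝ) (J : ℝ → ℝ)
    (hV : ∀ a b : ℝ, V a b =
      ((4 / 3) * c₁ * a ^ 2 + c₂ * a + c₃) * b ^ (-(2 : ℝ) / 3) + c₁ * b ^ ((4 : ℝ) / 3))
    (hx : ∀ t, HasDerivAt x (x' t) t)
    (hy : ∀ t, HasDerivAt y (y' t) t)
    (hx' : ∀ t, HasDerivAt x' (x'' t) t)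
    (hy' : ∀ t, HasDerivAt y' (y'' t) t)
    (hypos : ∀ t, 0 < y t)
    (heqx : ∀ t, x'' t = - deriv (fun a => V a (y t)) (x t))
    (heqy : ∀ t, y'' t = - deriv (fun b => V (x t) b) (y t))
    (hJ : ∀ t, J t =
      x' t ^ 3 + (3 / 2) * x' t * y' t ^ 2 +
      ((4 * c₁ * x t ^ 2 + 3 * c₂ * x t + 3 * c₃) * y t ^ (-(2 : ℝ) / 3) -
        6 * c₁ * y t ^ ((4 : ℝ) / 3)) * x' t +
      (12 * c₁ * x t + (9 / 2) * c₂) * y t ^ ((1 : ℝ) / 3) * y' t) :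
    ∀ t₁ t₂ : ℝ, J t₁ = J t₂ := by
  set p : ℝ → ℝ := fun a => 4 / 3 * c₁ * a ^ 2 + c₂ * a + c₃
  set p' : ℝ → ℝ := fun a => 8 / 3 * c₁ * a + c₂
  have hp (a : ℝ) : HasDerivAt p (p' a) a :=
    ((((hasDerivAt_pow 2 a).const_mul (4 / 3 * c₁)).add ((hasDerivAt_id a).const_mul c₂)).add_const
      c₃).congr_deriv (by simp only [p']; push_cast; ring)
  have hp' (a : ℝ) : HasDerivAt p' (8 / 3 * c₁) a :=
    (((hasDerivAt_id a).const_mul (8 / 3 * c₁)).add_const c₂).congr_deriv (mul_one _)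
  obtain rfl : V = holtPotential p c₁ := funext₂ hV
  have hforce (t : ℝ) : (x'' t, y'' t) = holtForce p p' c₁ (x t, y t) := by
    rw [heqx, heqy, (hasDerivAt_holtPotential_left (hp _) _).deriv,
      (hasDerivAt_holtPotential_right (p' := p') _ (hypos t).ne').deriv, neg_neg, neg_neg]
  have hJ_eq (t : ℝ) :
      J t = cubicIntegral (fun _ => holtCubic) (holtLinear p p' c₁) (x t, y t) (x' t, y' t) := by
    rw [hJ, cubicIntegral, holtCubic_apply, holtLinear_apply]
    ring
  intro t₁ t₂
  rw [hJ_eq, hJ_eq]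
  exact CubicDeterminingEquationsAt.cubicIntegral_eq
    (q := fun t => (x t, y t)) (v := fun t => (x' t, y' t))
    (fun t => holt_cubicDeterminingEquationsAt (hp _) (hp' _) (hypos t))
    (fun t => (hx t).prodMk (hy t)) (fun t => hforce t ▸ (hx' t).prodMk (hy' t)) t₁ t₂
end

section
/- Let c₁, c₂, c₃ be real constants. Suppose x, y : ℝ → ℝ are twice differentiable with x(t) ≠ 0 for all t, and satisfy the Newtonian equations of motion for the potential V(x,y) = c₁x² + c₂/x² + 4c₁y² + c₃y. Then the cubic function J(t) = x'²y' + x(8c₁y + c₃)·x' − 2(c₁x² − c₂/x²)·y' is constant in t. -/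
/-!
Along a motion with velocity `(u, v)` and acceleration `-∇V`, the derivative of a constant cubic
form in `(u, v)` plus `A u + B v`, where `A` and `B` depend on the position, is a quadratic form in
`(u, v)` minus `A V_x + B V_y`. For the cubic form `u² v`, the choice `A = x V_y`, `B = -x V_x`
kills the term free of velocities. If `V` is separable, the quadratic form then vanishes exactly
when `(x³ V_x)_x = x³ V_yy`, which makes `V_yy` a constant `8 c₁` and leaves
`V_x = 2 c₁ x - 2 c₂ / x³`.
-/

section PointwiseDerivatives

variable {𝕜 : Type*} [NontriviallyNormedField 𝕜]

-- `Vx, Vy, Ax, Ay, Bx, By` are the partial derivatives at the current position; `A` and `B` are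
-- restricted to the trajectory, so their total derivatives enter through the chain rule.
theorem hasDerivAt_cubic_add_linear_zero {α β γ δ Vx Vy Ax Ay Bx By t : 𝕜} {u v A B : 𝕜 → 𝕜}
    (hu : HasDerivAt u (-Vx) t) (hv : HasDerivAt v (-Vy) t)
    (hA : HasDerivAt A (Ax * u t + Ay * v t) t) (hB : HasDerivAt B (Bx * u t + By * v t) t)
    (h_uu : Ax = 3 * α * Vx + β * Vy) (h_uv : Ay + Bx = 2 * β * Vx + 2 * γ * Vy)
    (h_vv : By = γ * Vx + 3 * δ * Vy) (h_one : A t * Vx + B t * Vy = 0) :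
    HasDerivAt (fun s => α * u s ^ 3 + β * (u s ^ 2 * v s) + γ * (u s * v s ^ 2) + δ * v s ^ 3 +
      (A s * u s + B s * v s)) 0 t := by
  have h_deriv := ((((hu.fun_pow 3).const_mul α).fun_add
    (((hu.fun_pow 2).fun_mul hv).const_mul β)).fun_add
    ((hu.fun_mul (hv.fun_pow 2)).const_mul γ)).fun_add ((hv.fun_pow 3).const_mul δ)
    |>.fun_add ((hA.fun_mul hu).fun_add (hB.fun_mul hv))
  refine h_deriv.congr_deriv ?_
  push_cast
  linear_combination u t ^ 2 * h_uu + u t * v t * h_uv + v t ^ 2 * h_vv - h_one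

theorem hasDerivAt_const_div_sq (c : 𝕜) {a : 𝕜} (ha : a ≠ 0) :
    HasDerivAt (fun s => c / s ^ 2) (-(2 * c / a ^ 3)) a := by
  refine ((hasDerivAt_const a c).fun_div (hasDerivAt_pow 2 a) (pow_ne_zero 2 ha)).congr_deriv ?_
  push_cast
  field_simp
  ring

/-- The potential `V(x, y) = c₁ x² + c₂ / x² + 4 c₁ y² + c₃ y`: a 1:2 anisotropic oscillator with a
centrifugal term. At `x = 0` the term `c₂ / x²` takes the junk value `0`. -/
def oscillatorPotential (c₁ c₂ c₃ x y : 𝕜) : 𝕜 :=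
  c₁ * x ^ 2 + c₂ / x ^ 2 + 4 * c₁ * y ^ 2 + c₃ * y

/-- The cubic first integral of the motion in `oscillatorPotential`, as a function of the position
`(x, y)` and the velocity `(u, v)`. -/
def oscillatorCubicIntegral (c₁ c₂ c₃ x y u v : 𝕜) : 𝕜 :=
  u ^ 2 * v + x * (8 * c₁ * y + c₃) * u - 2 * (c₁ * x ^ 2 - c₂ / x ^ 2) * v

variable (c₁ c₂ c₃ : 𝕜)

theorem hasDerivAt_oscillatorPotential_left {a : 𝕜} (ha : a ≠ 0) (b : 𝕜) :
    HasDerivAt (fun x => oscillatorPotential c₁ c₂ c₃ x b) (2 * c₁ * a - 2 * c₂ / a ^ 3) a := by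
  have h_deriv := ((((hasDerivAt_pow 2 a).const_mul c₁).fun_add
    (hasDerivAt_const_div_sq c₂ ha)).add_const (4 * c₁ * b ^ 2)).add_const (c₃ * b)
  refine h_deriv.congr_deriv ?_
  push_cast
  ring

theorem hasDerivAt_oscillatorPotential_right (a b : 𝕜) :
    HasDerivAt (fun y => oscillatorPotential c₁ c₂ c₃ a y) (8 * c₁ * b + c₃) b := by
  have h_deriv := (((hasDerivAt_pow 2 b).const_mul (4 * c₁)).const_add
    (c₁ * a ^ 2 + c₂ / a ^ 2)).fun_add ((hasDerivAt_id' b).const_mul c₃)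
  refine h_deriv.congr_deriv ?_
  push_cast
  ring

variable {c₁ c₂ c₃}

theorem hasDerivAt_oscillatorCubicIntegral_zero {x y x' y' : 𝕜 → 𝕜} {t : 𝕜}
    (hx : HasDerivAt x (x' t) t) (hy : HasDerivAt y (y' t) t) (hxne : x t ≠ 0)
    (hx' : HasDerivAt x' (-deriv (fun a => oscillatorPotential c₁ c₂ c₃ a (y t)) (x t)) t)
    (hy' : HasDerivAt y' (-deriv (fun b => oscillatorPotential c₁ c₂ c₃ (x t) b) (y t)) t) :
    HasDerivAt (fun s => oscillatorCubicIntegral c₁ c₂ c₃ (x s) (y s) (x' s) (y' s)) 0 t := by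
  rw [(hasDerivAt_oscillatorPotential_left c₁ c₂ c₃ hxne (y t)).deriv] at hx'
  rw [(hasDerivAt_oscillatorPotential_right c₁ c₂ c₃ (x t) (y t)).deriv] at hy'
  have hA : HasDerivAt (fun s => x s * (8 * c₁ * y s + c₃))
      ((8 * c₁ * y t + c₃) * x' t + 8 * c₁ * x t * y' t) t := by
    refine (hx.fun_mul ((hy.const_mul (8 * c₁)).add_const c₃)).congr_deriv ?_
    ring
  have hB : HasDerivAt (fun s => -2 * (c₁ * x s ^ 2 - c₂ / x s ^ 2))
      (-(4 * c₁ * x t + 4 * c₂ / x t ^ 3) * x' t + 0 * y' t) t := by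
    have h_div : HasDerivAt (fun s => c₂ / x s ^ 2) (-(2 * c₂ / x t ^ 3) * x' t) t :=
      (hasDerivAt_const_div_sq c₂ hxne).comp t hx
    refine ((((hx.fun_pow 2).const_mul c₁).fun_sub h_div).const_mul (-2)).congr_deriv ?_
    push_cast
    ring
  have h_cubic := hasDerivAt_cubic_add_linear_zero (α := 0) (β := 1) (γ := 0) (δ := 0)
    hx' hy' hA hB (by ring) (by ring) (by ring) (by field_simp; ring)
  refine h_cubic.congr_of_eventuallyEq (.of_forall fun s => ?_)
  simp only [oscillatorCubicIntegral]
  ring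

end PointwiseDerivatives

-- Over an arbitrary open time domain this covers motions that reach the singular line `x = 0` in
-- finite time, as can happen when `c₂ < 0`; over `ℂ` it covers holomorphic motions.
theorem stmt_3_general {𝕜 : Type*} [RCLike 𝕜] {c₁ c₂ c₃ : 𝕜} {x y x' y' : 𝕜 → 𝕜} {s : Set 𝕜}
    (hs : IsOpen s) (hs' : IsPreconnected s)
    (hx : ∀ t ∈ s, HasDerivAt x (x' t) t) (hy : ∀ t ∈ s, HasDerivAt y (y' t) t)
    (hxne : ∀ t ∈ s, x t ≠ 0)
    (hx' : ∀ t ∈ s,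
      HasDerivAt x' (-deriv (fun a => oscillatorPotential c₁ c₂ c₃ a (y t)) (x t)) t)
    (hy' : ∀ t ∈ s,
      HasDerivAt y' (-deriv (fun b => oscillatorPotential c₁ c₂ c₃ (x t) b) (y t)) t)
    {t₁ t₂ : 𝕜} (ht₁ : t₁ ∈ s) (ht₂ : t₂ ∈ s) :
    oscillatorCubicIntegral c₁ c₂ c₃ (x t₁) (y t₁) (x' t₁) (y' t₁) =
      oscillatorCubicIntegral c₁ c₂ c₃ (x t₂) (y t₂) (x' t₂) (y' t₂) := by
  have h_deriv : ∀ t ∈ s,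
      HasDerivAt (fun r => oscillatorCubicIntegral c₁ c₂ c₃ (x r) (y r) (x' r) (y' r)) 0 t :=
    fun t ht => hasDerivAt_oscillatorCubicIntegral_zero
      (hx t ht) (hy t ht) (hxne t ht) (hx' t ht) (hy' t ht)
  exact hs.is_const_of_deriv_eq_zero hs'
    (fun t ht => (h_deriv t ht).differentiableAt.differentiableWithinAt)
    (fun t ht => (h_deriv t ht).deriv) ht₁ ht₂

theorem stmt_3 (c₁ c₂ c₃ : ℝ) (x y x' y' x'' y'' : ℝ → ℝ) (V : ℝ → ℝ → ℝ) (J : ℝ → ℝ)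
    (hV : ∀ a b : ℝ, V a b = c₁ * a ^ 2 + c₂ / a ^ 2 + 4 * c₁ * b ^ 2 + c₃ * b)
    (hx : ∀ t, HasDerivAt x (x' t) t)
    (hy : ∀ t, HasDerivAt y (y' t) t)
    (hx' : ∀ t, HasDerivAt x' (x'' t) t)
    (hy' : ∀ t, HasDerivAt y' (y'' t) t)
    (hxne : ∀ t, x t ≠ 0)
    (heqx : ∀ t, x'' t = - deriv (fun a => V a (y t)) (x t))
    (heqy : ∀ t, y'' t = - deriv (fun b => V (x t) b) (y t))
    (hJ : ∀ t, J t =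
      x' t ^ 2 * y' t + x t * (8 * c₁ * y t + c₃) * x' t -
      2 * (c₁ * x t ^ 2 - c₂ / x t ^ 2) * y' t) :
    ∀ t₁ t₂ : ℝ, J t₁ = J t₂ := by
  obtain rfl : V = oscillatorPotential c₁ c₂ c₃ := funext₂ hV
  intro t₁ t₂
  rw [hJ, hJ]
  exact stmt_3_general isOpen_univ isPreconnected_univ (fun t _ => hx t) (fun t _ => hy t)
    (fun t _ => hxne t) (fun t _ => heqx t ▸ hx' t) (fun t _ => heqy t ▸ hy' t)
    (Set.mem_univ t₁) (Set.mem_univ t₂)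
end

section
/- Let k be a real constant. Suppose x, y : ℝ → ℝ are twice differentiable with x(t) > 0 and y(t) > 0 for all t, and satisfy the Newtonian equations of motion for the potential V(x,y) = k(√x + √y). Then the cubic function J(t) = x'³ − y'³ + 3k(√x·x' − √y·y') is constant in t. -/
/-!
Along a one-dimensional motion `q'' = -F'(q)` with velocity `v = q'`, the cubic `v³ + 3 F(q) v` has
derivative `-3 F(q) F'(q)`, because the terms quadratic in `v` cancel. For `F(q) = k √q` the
product `F F' = k² / 2` does not depend on the position, so the cubics of the two coordinates grow
at the same rate, whatever the initial data, and their difference is conserved.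
-/

/-- The cubic `v³ + 3 F(q) v` in the velocity `v` attached to a particle at position `q` on a line,
moving in the potential `F`: the contribution of one coordinate to the cubic first integral. -/
def velocityCubic {𝕜 : Type*} [Field 𝕜] (F : 𝕜 → 𝕜) (q v : 𝕜) : 𝕜 :=
  v ^ 3 + 3 * F q * v

theorem hasDerivAt_velocityCubic {𝕜 : Type*} [NontriviallyNormedField 𝕜] {F q v : 𝕜 → 𝕜} {f t : 𝕜}
    (hF : HasDerivAt F f (q t)) (hq : HasDerivAt q (v t) t) (hv : HasDerivAt v (-f) t) :
    HasDerivAt (fun s ↦ velocityCubic F (q s) (v s)) (-3 * (F (q t) * f)) t := by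
  have hFq : HasDerivAt (fun s ↦ F (q s)) (f * v t) t := hF.comp t hq
  refine ((hv.fun_pow 3).fun_add ((hFq.const_mul 3).fun_mul hv)).congr_deriv ?_
  push_cast
  ring

/-- Two motions on a line, `x` in the potential `F` and `y` in the potential `G`, are together one
motion in the plane with separable potential `F(x) + G(y)`. -/
theorem velocityCubic_sub_velocityCubic_eq {𝕜 : Type*} [RCLike 𝕜]
    {F F' G G' x x' y y' : 𝕜 → 𝕜}
    (hF : ∀ t, HasDerivAt F (F' (x t)) (x t)) (hG : ∀ t, HasDerivAt G (G' (y t)) (y t))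
    (hx : ∀ t, HasDerivAt x (x' t) t) (hx' : ∀ t, HasDerivAt x' (-F' (x t)) t)
    (hy : ∀ t, HasDerivAt y (y' t) t) (hy' : ∀ t, HasDerivAt y' (-G' (y t)) t)
    (hFG : ∀ t, F (x t) * F' (x t) = G (y t) * G' (y t)) (t₁ t₂ : 𝕜) :
    velocityCubic F (x t₁) (x' t₁) - velocityCubic G (y t₁) (y' t₁) =
      velocityCubic F (x t₂) (x' t₂) - velocityCubic G (y t₂) (y' t₂) := by
  have hderiv (t : 𝕜) : HasDerivAt
      (fun s ↦ velocityCubic F (x s) (x' s) - velocityCubic G (y s) (y' s)) 0 t := by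
    refine ((hasDerivAt_velocityCubic (hF t) (hx t) (hx' t)).fun_sub
      (hasDerivAt_velocityCubic (hG t) (hy t) (hy' t))).congr_deriv ?_
    rw [hFG t, sub_self]
  exact is_const_of_deriv_eq_zero (fun t ↦ (hderiv t).differentiableAt)
    (fun t ↦ (hderiv t).deriv) t₁ t₂

theorem hasDerivAt_const_mul_sqrt (k : ℝ) {a : ℝ} (ha : a ≠ 0) :
    HasDerivAt (fun s ↦ k * √s) (k / (2 * √a)) a := by
  simpa only [mul_one_div] using (Real.hasDerivAt_sqrt ha).const_mul k

theorem const_mul_sqrt_mul_div_two_mul_sqrt (k : ℝ) {a : ℝ} (ha : 0 < a) :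
    k * √a * (k / (2 * √a)) = k ^ 2 / 2 := by
  have hsqrt : √a ≠ 0 := (Real.sqrt_pos.2 ha).ne'
  field_simp

theorem stmt_6 (k : ℝ) (x y x' y' x'' y'' : ℝ → ℝ) (V : ℝ → ℝ → ℝ) (J : ℝ → ℝ)
    (hV : ∀ a b : ℝ, V a b = k * (Real.sqrt a + Real.sqrt b))
    (hx : ∀ t, HasDerivAt x (x' t) t)
    (hy : ∀ t, HasDerivAt y (y' t) t)
    (hx' : ∀ t, HasDerivAt x' (x'' t) t)
    (hy' : ∀ t, HasDerivAt y' (y'' t) t)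
    (hxpos : ∀ t, 0 < x t)
    (hypos : ∀ t, 0 < y t)
    (heqx : ∀ t, x'' t = - deriv (fun a => V a (y t)) (x t))
    (heqy : ∀ t, y'' t = - deriv (fun b => V (x t) b) (y t))
    (hJ : ∀ t, J t =
      x' t ^ 3 - y' t ^ 3 +
      3 * k * (Real.sqrt (x t) * x' t - Real.sqrt (y t) * y' t)) :
    ∀ t₁ t₂ : ℝ, J t₁ = J t₂ := by
  have hF (t : ℝ) := hasDerivAt_const_mul_sqrt k (hxpos t).ne'
  have hG (t : ℝ) := hasDerivAt_const_mul_sqrt k (hypos t).ne'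
  have hforce_x (t : ℝ) : x'' t = -(k / (2 * √(x t))) := by
    simpa only [heqx, hV, mul_add] using congrArg Neg.neg ((hF t).add_const (k * √(y t))).deriv
  have hforce_y (t : ℝ) : y'' t = -(k / (2 * √(y t))) := by
    simpa only [heqy, hV, mul_add] using congrArg Neg.neg ((hG t).const_add (k * √(x t))).deriv
  have hJ_cubic (t : ℝ) : J t = velocityCubic (fun a ↦ k * √a) (x t) (x' t) -
      velocityCubic (fun a ↦ k * √a) (y t) (y' t) := by
    rw [hJ, velocityCubic, velocityCubic]
    ring
  intro t₁ t₂
  rw [hJ_cubic, hJ_cubic]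
  refine velocityCubic_sub_velocityCubic_eq (F' := fun a ↦ k / (2 * √a))
    (G' := fun a ↦ k / (2 * √a)) hF hG hx (fun t ↦ hforce_x t ▸ hx' t)
    hy (fun t ↦ hforce_y t ▸ hy' t) (fun t ↦ ?_) t₁ t₂
  rw [const_mul_sqrt_mul_div_two_mul_sqrt k (hxpos t),
    const_mul_sqrt_mul_div_two_mul_sqrt k (hypos t)]
end

section
/- Let k be a real constant. Suppose x, y : ℝ → ℝ are twice differentiable with x(t) > 0 and y(t) > 0 for all t, and satisfy the Newtonian equations of motion for the Inozemtsev potential V(x,y) = k·(xy)^{−2/3}. Then the cubic function J(t) = (y·x' − x·y')·x'·y' − 2k·(xy)^{−2/3}·(x·x' − y·y') is constant in t. -/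
/-!
For a potential of the form `V(x, y) = f(xy)`, differentiating
`(y x' - x y') x' y' - 2 f(xy) (x x' - y y')` along a Newtonian trajectory leaves only
`-(3 s f'(s) + 2 f(s)) (x'² - y'²)` with `s = xy`. The first factor is Euler's equation for
homogeneity of degree `-2/3`, so it vanishes for `f(s) = k s ^ (-2/3)`.
-/

/-- Newton's equations in the plane for the potential `V`, at the times in `I`, for the position
`(x, y)` with velocity `(u, v)`. Time derivatives are two-sided, so `I` is meant to be open; each
force component is a `deriv`, hence `0` where that partial derivative of `V` does not exist. -/
structure IsNewtonianTrajectoryOn (V : ℝ → ℝ → ℝ) (x y u v : ℝ → ℝ) (I : Set ℝ) : Prop where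
  hasDerivAt_fst : ∀ t ∈ I, HasDerivAt x (u t) t
  hasDerivAt_snd : ∀ t ∈ I, HasDerivAt y (v t) t
  hasDerivAt_velocity_fst : ∀ t ∈ I, HasDerivAt u (-deriv (fun a => V a (y t)) (x t)) t
  hasDerivAt_velocity_snd : ∀ t ∈ I, HasDerivAt v (-deriv (fun b => V (x t) b) (y t)) t

/-- The candidate cubic first integral for the potential `f(ab)`, at the position `(a, b)` with
velocity `(p, q)`. -/
def inozemtsevCubic (f : ℝ → ℝ) (a b p q : ℝ) : ℝ :=
  (b * p - a * q) * p * q - 2 * f (a * b) * (a * p - b * q)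

theorem mul_deriv_const_mul_rpow (k r : ℝ) {s : ℝ} (hs : s ≠ 0) :
    s * deriv (fun z : ℝ => k * z ^ r) s = r * (k * s ^ r) := by
  rw [((Real.hasDerivAt_rpow_const (Or.inl hs)).const_mul k).deriv, Real.rpow_sub_one hs]
  field_simp

theorem differentiableAt_const_mul_rpow (k r : ℝ) {s : ℝ} (hs : s ≠ 0) :
    DifferentiableAt ℝ (fun z : ℝ => k * z ^ r) s :=
  (Real.hasDerivAt_rpow_const (Or.inl hs)).differentiableAt.const_mul k

namespace IsNewtonianTrajectoryOn

variable {f x y u v : ℝ → ℝ} {I : Set ℝ} {t : ℝ}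

theorem hasDerivAt_inozemtsevCubic
    (h : IsNewtonianTrajectoryOn (fun a b => f (a * b)) x y u v I) (ht : t ∈ I)
    (hf : DifferentiableAt ℝ f (x t * y t)) :
    HasDerivAt (fun τ => inozemtsevCubic f (x τ) (y τ) (u τ) (v τ))
      (-(3 * (x t * y t * deriv f (x t * y t)) + 2 * f (x t * y t)) * (u t ^ 2 - v t ^ 2)) t := by
  have hx := h.hasDerivAt_fst t ht
  have hy := h.hasDerivAt_snd t ht
  have hu : HasDerivAt u (-(y t * deriv f (x t * y t))) t := by
    simpa only [mul_comm _ (y t), deriv_comp_mul_left, smul_eq_mul] using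
      h.hasDerivAt_velocity_fst t ht
  have hv : HasDerivAt v (-(x t * deriv f (x t * y t))) t := by
    simpa only [deriv_comp_mul_left, smul_eq_mul] using h.hasDerivAt_velocity_snd t ht
  have hfxy := hf.hasDerivAt.comp t (hx.mul hy)
  have hcubic := ((((hy.mul hu).sub (hx.mul hv)).mul hu).mul hv).sub
    ((hfxy.const_mul 2).mul ((hx.mul hu).sub (hy.mul hv)))
  refine hcubic.congr_deriv ?_
  simp only [Pi.mul_apply, Pi.sub_apply, Function.comp_apply]
  ring

theorem inozemtsevCubic_eq (h : IsNewtonianTrajectoryOn (fun a b => f (a * b)) x y u v I)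
    (hIo : IsOpen I) (hIc : IsPreconnected I)
    (hf : ∀ t ∈ I, DifferentiableAt ℝ f (x t * y t))
    (euler : ∀ t ∈ I, 3 * (x t * y t * deriv f (x t * y t)) + 2 * f (x t * y t) = 0)
    {t₁ t₂ : ℝ} (ht₁ : t₁ ∈ I) (ht₂ : t₂ ∈ I) :
    inozemtsevCubic f (x t₁) (y t₁) (u t₁) (v t₁) =
      inozemtsevCubic f (x t₂) (y t₂) (u t₂) (v t₂) := by
  have hderiv : ∀ t ∈ I,
      HasDerivAt (fun τ => inozemtsevCubic f (x τ) (y τ) (u τ) (v τ)) 0 t := fun t ht => by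
    simpa only [euler t ht, neg_zero, zero_mul] using h.hasDerivAt_inozemtsevCubic ht (hf t ht)
  exact hIo.is_const_of_deriv_eq_zero hIc
    (fun t ht => (hderiv t ht).differentiableAt.differentiableWithinAt)
    (fun t ht => (hderiv t ht).deriv) ht₁ ht₂

end IsNewtonianTrajectoryOn

-- Restricting to a time interval admits `k < 0`, where a trajectory with `0 < x * y` cannot exist
-- for all times: `|x|` would be positive and strictly concave on `ℝ`.
theorem stmt_7_general {k : ℝ} {x y u v : ℝ → ℝ} {I : Set ℝ}
    (hIo : IsOpen I) (hIc : IsPreconnected I)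
    (h : IsNewtonianTrajectoryOn (fun a b => k * (a * b) ^ (-(2 : ℝ) / 3)) x y u v I)
    (hxy : ∀ t ∈ I, 0 < x t * y t) {t₁ t₂ : ℝ} (ht₁ : t₁ ∈ I) (ht₂ : t₂ ∈ I) :
    inozemtsevCubic (fun s => k * s ^ (-(2 : ℝ) / 3)) (x t₁) (y t₁) (u t₁) (v t₁) =
      inozemtsevCubic (fun s => k * s ^ (-(2 : ℝ) / 3)) (x t₂) (y t₂) (u t₂) (v t₂) := by
  refine IsNewtonianTrajectoryOn.inozemtsevCubic_eq (f := fun s => k * s ^ (-(2 : ℝ) / 3)) h hIo hIc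
    (fun t ht => differentiableAt_const_mul_rpow k _ (hxy t ht).ne') (fun t ht => ?_) ht₁ ht₂
  rw [mul_deriv_const_mul_rpow k _ (hxy t ht).ne']
  ring

/-- Inozemtsev potential V = k (xy)^{-2/3}: the cubic expression is a first integral. -/
theorem stmt_7 (k : ℝ) (x y x' y' x'' y'' : ℝ → ℝ) (V : ℝ → ℝ → ℝ) (J : ℝ → ℝ)
    (hV : ∀ a b : ℝ, V a b = k * (a * b) ^ (-(2 : ℝ) / 3))
    (hx : ∀ t, HasDerivAt x (x' t) t)
    (hy : ∀ t, HasDerivAt y (y' t) t)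
    (hx' : ∀ t, HasDerivAt x' (x'' t) t)
    (hy' : ∀ t, HasDerivAt y' (y'' t) t)
    (hxpos : ∀ t, 0 < x t)
    (hypos : ∀ t, 0 < y t)
    (heqx : ∀ t, x'' t = - deriv (fun a => V a (y t)) (x t))
    (heqy : ∀ t, y'' t = - deriv (fun b => V (x t) b) (y t))
    (hJ : ∀ t, J t =
      (y t * x' t - x t * y' t) * x' t * y' t -
      2 * k * (x t * y t) ^ (-(2 : ℝ) / 3) * (x t * x' t - y t * y' t)) :
    ∀ t₁ t₂ : ℝ, J t₁ = J t₂ := by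
  intro t₁ t₂
  obtain rfl : V = fun a b => k * (a * b) ^ (-(2 : ℝ) / 3) := funext₂ hV
  have traj : IsNewtonianTrajectoryOn (fun a b => k * (a * b) ^ (-(2 : ℝ) / 3)) x y x' y'
      Set.univ :=
    ⟨fun t _ => hx t, fun t _ => hy t, fun t _ => heqx t ▸ hx' t, fun t _ => heqy t ▸ hy' t⟩
  simpa only [inozemtsevCubic, hJ, mul_assoc] using stmt_7_general isOpen_univ isPreconnected_univ
    traj (fun t _ => mul_pos (hxpos t) (hypos t)) (Set.mem_univ t₁) (Set.mem_univ t₂)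
end

section
/- Let c₀ be a real constant. Suppose x, y : ℝ → ℝ are twice differentiable and satisfy the Newtonian equations of motion for the anisotropic oscillator potential V(x,y) = c₀(9x² + y²). Then the cubic function J(t) = (x·y' − y·x')·y'² + (2c₀/3)·y³·x' − 6c₀·x·y²·y' is constant in t. -/
/-! With `ω² = 2c₀` the equations of motion are `x'' = -(3ω)² x`, `y'' = -ω² y`, so `x' + 3iωx` and
`y' - iωy` evolve by the factors `e^{3iωt}` and `e^{-iωt}`. Hence `(x' + 3iωx)(y' - iωy)³` is
constant: this is where the 1 : 3 resonance enters. For `ω > 0` its imaginary part is `3ωJ`.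
Since `J` involves only `ω²`, its conservation is a polynomial identity in `c₀`, which covers
`c₀ ≤ 0` too. -/

namespace AnisotropicOscillator

/-- The potential `k a² + l b²` of an oscillator with its axes along the coordinate axes. -/
def potential {R : Type*} [Semiring R] (k l a b : R) : R :=
  k * a ^ 2 + l * b ^ 2

/-- The cubic first integral of the potential `c (9 a² + b²)`, as a function on phase space:
`(a, b)` is the position and `(p, q)` the velocity. -/
def cubicIntegral {K : Type*} [Field K] (c a b p q : K) : K :=
  (a * q - b * p) * q ^ 2 + (2 * c / 3) * b ^ 3 * p - 6 * c * a * b ^ 2 * q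

variable {𝕜 : Type*} [NontriviallyNormedField 𝕜]

theorem deriv_potential_left (k l a b : 𝕜) :
    deriv (fun u => potential k l u b) a = 2 * k * a := by
  have h : HasDerivAt (fun u => potential k l u b) (k * (2 * a)) a := by
    simpa [potential] using ((hasDerivAt_pow 2 a).const_mul k).add_const (l * b ^ 2)
  rw [h.deriv]
  ring

theorem deriv_potential_right (k l a b : 𝕜) :
    deriv (fun u => potential k l a u) b = 2 * l * b := by
  simpa only [potential, add_comm] using deriv_potential_left l k b a

variable {x y x' y' : 𝕜 → 𝕜} {ax ay t : 𝕜}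

theorem hasDerivAt_angularMomentum (hx : HasDerivAt x (x' t) t) (hy : HasDerivAt y (y' t) t)
    (hx' : HasDerivAt x' ax t) (hy' : HasDerivAt y' ay t) :
    HasDerivAt (fun s => x s * y' s - y s * x' s) (x t * ay - y t * ax) t :=
  ((hx.mul hy').sub (hy.mul hx')).congr_deriv (by ring)

/- The curve need not solve the equations of motion: their residuals appear with the coefficients
`∂J/∂p` and `∂J/∂q`, and the absence of a further term says that `J` Poisson-commutes with the
energy. -/
theorem hasDerivAt_cubicIntegral [CharZero 𝕜] (c : 𝕜)
    (hx : HasDerivAt x (x' t) t) (hy : HasDerivAt y (y' t) t)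
    (hx' : HasDerivAt x' ax t) (hy' : HasDerivAt y' ay t) :
    HasDerivAt (fun s => cubicIntegral c (x s) (y s) (x' s) (y' s))
      ((2 * c / 3 * y t ^ 3 - y t * y' t ^ 2) * (ax + 18 * c * x t) +
        (3 * x t * y' t ^ 2 - 2 * y t * x' t * y' t - 6 * c * x t * y t ^ 2) *
          (ay + 2 * c * y t)) t := by
  have h_angular := (hasDerivAt_angularMomentum hx hy hx' hy').mul (hy'.pow 2)
  have h_x' := ((hy.pow 3).const_mul (2 * c / 3)).mul hx'
  have h_y' := ((hx.const_mul (6 * c)).mul (hy.pow 2)).mul hy'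
  refine ((h_angular.add h_x').sub h_y').congr_deriv ?_
  simp only [Pi.mul_apply, Pi.pow_apply]
  push_cast
  ring

end AnisotropicOscillator

open AnisotropicOscillator in
theorem stmt_9_general {𝕜 : Type*} [RCLike 𝕜] (c₀ : 𝕜) (x y x' y' x'' y'' : 𝕜 → 𝕜)
    (V : 𝕜 → 𝕜 → 𝕜) (J : 𝕜 → 𝕜)
    (hV : ∀ a b : 𝕜, V a b = c₀ * (9 * a ^ 2 + b ^ 2))
    (hx : ∀ t, HasDerivAt x (x' t) t)
    (hy : ∀ t, HasDerivAt y (y' t) t)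
    (hx' : ∀ t, HasDerivAt x' (x'' t) t)
    (hy' : ∀ t, HasDerivAt y' (y'' t) t)
    (heqx : ∀ t, x'' t = - deriv (fun a => V a (y t)) (x t))
    (heqy : ∀ t, y'' t = - deriv (fun b => V (x t) b) (y t))
    (hJ : ∀ t, J t =
      (x t * y' t - y t * x' t) * y' t ^ 2 +
      (2 * c₀ / 3) * y t ^ 3 * x' t - 6 * c₀ * x t * y t ^ 2 * y' t) :
    ∀ t₁ t₂ : 𝕜, J t₁ = J t₂ := by
  obtain rfl : V = potential (9 * c₀) c₀ := funext₂ fun a b => by rw [hV, potential]; ring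
  obtain rfl : J = fun t => cubicIntegral c₀ (x t) (y t) (x' t) (y' t) := funext hJ
  have newton_x (t : 𝕜) : x'' t + 18 * c₀ * x t = 0 := by
    rw [heqx, deriv_potential_left]; ring
  have newton_y (t : 𝕜) : y'' t + 2 * c₀ * y t = 0 := by
    rw [heqy, deriv_potential_right]; ring
  have conserved (t : 𝕜) :
      HasDerivAt (fun s => cubicIntegral c₀ (x s) (y s) (x' s) (y' s)) 0 t := by
    simpa only [newton_x, newton_y, mul_zero, add_zero] using
      hasDerivAt_cubicIntegral c₀ (hx t) (hy t) (hx' t) (hy' t)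
  exact is_const_of_deriv_eq_zero (fun t => (conserved t).differentiableAt)
    fun t => (conserved t).deriv

theorem stmt_9 (c₀ : ℝ) (x y x' y' x'' y'' : ℝ → ℝ) (V : ℝ → ℝ → ℝ) (J : ℝ → ℝ)
    (hV : ∀ a b : ℝ, V a b = c₀ * (9 * a ^ 2 + b ^ 2))
    (hx : ∀ t, HasDerivAt x (x' t) t)
    (hy : ∀ t, HasDerivAt y (y' t) t)
    (hx' : ∀ t, HasDerivAt x' (x'' t) t)
    (hy' : ∀ t, HasDerivAt y' (y'' t) t)
    (heqx : ∀ t, x'' t = - deriv (fun a => V a (y t)) (x t))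
    (heqy : ∀ t, y'' t = - deriv (fun b => V (x t) b) (y t))
    (hJ : ∀ t, J t =
      (x t * y' t - y t * x' t) * y' t ^ 2 +
      (2 * c₀ / 3) * y t ^ 3 * x' t - 6 * c₀ * x t * y t ^ 2 * y' t) :
    ∀ t₁ t₂ : ℝ, J t₁ = J t₂ :=
  stmt_9_general c₀ x y x' y' x'' y'' V J hV hx hy hx' hy' heqx heqy hJ
end

section
/- Let c₁, c₂, c₃ be real constants. Suppose x, y : ℝ → ℝ are twice differentiable with x(t)² ≠ y(t)² for all t, and satisfy the Newtonian equations of motion for the potential V(x,y) = c₁(x² + y²) + (c₂·xy + c₃·(x² + y²))/(x² − y²)². Then the cubic function J(t) = (x·y' − y·x')·(y'² − x'²) − 2c₁(x·y' − y·x')·(x² − y²) + x(x² + 3y²)(c₂·x' + 2c₃·y')/(x² − y²)² + y(3x² + y²)(2c₃·x' + c₂·y')/(x² − y²)² is constant in t. -/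
/-!
In the rotated coordinates `u = x + y`, `v = x - y` the potential separates and the motion splits
into two isotonic oscillators `w'' = -ω w + κ / w ^ 3` sharing the frequency parameter `ω = 2 c₁`.
For each of them the virial `z = w w'` satisfies
`z' = w' ^ 2 - ω w ^ 2 + κ / w ^ 2 = 2 E - 2 ω w ^ 2` with `E` the conserved energy, hence the
linear equation `z'' = -4 ω z`, in which `κ` no longer appears. The Wronskian of the two virials
is therefore constant, and it equals twice the cubic first integral.
-/

open Topology

section Separation

variable {𝕜 : Type*} [Field 𝕜]

/-- The potential of the theorem: the Smorodinsky–Winternitz potential with its singular lines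
rotated to the diagonals `a = b` and `a = -b`. -/
def diagonalPotential (c₁ c₂ c₃ a b : 𝕜) : 𝕜 :=
  c₁ * (a ^ 2 + b ^ 2) + (c₂ * a * b + c₃ * (a ^ 2 + b ^ 2)) / (a ^ 2 - b ^ 2) ^ 2

/-- The cubic first integral of `diagonalPotential`, as a function of the position `(a, b)` and the
velocity `(p, q)`. -/
def diagonalCubicIntegral (c₁ c₂ c₃ a b p q : 𝕜) : 𝕜 :=
  (a * q - b * p) * (q ^ 2 - p ^ 2) -
    2 * c₁ * (a * q - b * p) * (a ^ 2 - b ^ 2) +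
    a * (a ^ 2 + 3 * b ^ 2) * (c₂ * p + 2 * c₃ * q) / (a ^ 2 - b ^ 2) ^ 2 +
    b * (3 * a ^ 2 + b ^ 2) * (2 * c₃ * p + c₂ * q) / (a ^ 2 - b ^ 2) ^ 2

/-- The potential of the isotonic oscillator: a harmonic well with a centrifugal barrier,
normalized so that the force is `-ω w + κ / w ^ 3`. -/
def isotonicPotential (ω κ w : 𝕜) : 𝕜 :=
  ω / 2 * w ^ 2 + κ / (2 * w ^ 2)

/-- The time derivative `v ^ 2 + w * w''` of the virial `w * v` of an isotonic oscillator, as a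
function of its position `w` and velocity `v`. -/
def isotonicVirialRate (ω κ w v : 𝕜) : 𝕜 :=
  v ^ 2 - ω * w ^ 2 + κ / w ^ 2

theorem add_ne_zero_and_sub_ne_zero_of_sq_ne_sq {R : Type*} [CommRing R] {a b : R}
    (h : a ^ 2 ≠ b ^ 2) : a + b ≠ 0 ∧ a - b ≠ 0 := by
  rw [← sub_ne_zero, sq_sub_sq] at h
  exact ⟨left_ne_zero_of_mul h, right_ne_zero_of_mul h⟩

variable [NeZero (2 : 𝕜)] {c₁ c₂ c₃ a b : 𝕜}

theorem diagonalPotential_eq_isotonicPotential (h : a ^ 2 ≠ b ^ 2) :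
    diagonalPotential c₁ c₂ c₃ a b =
      (isotonicPotential (2 * c₁) (2 * c₃ - c₂) (a + b) +
        isotonicPotential (2 * c₁) (2 * c₃ + c₂) (a - b)) / 2 := by
  obtain ⟨hadd, hsub⟩ := add_ne_zero_and_sub_ne_zero_of_sq_ne_sq h
  have h2 : (2 : 𝕜) ≠ 0 := two_ne_zero
  simp only [diagonalPotential, isotonicPotential, sq_sub_sq]
  field_simp
  ring

theorem diagonalCubicIntegral_eq_wronskian_virial (h : a ^ 2 ≠ b ^ 2) (p q : 𝕜) :
    diagonalCubicIntegral c₁ c₂ c₃ a b p q =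
      ((a + b) * (p + q) * isotonicVirialRate (2 * c₁) (2 * c₃ + c₂) (a - b) (p - q) -
        isotonicVirialRate (2 * c₁) (2 * c₃ - c₂) (a + b) (p + q) * ((a - b) * (p - q))) / 2 := by
  obtain ⟨hadd, hsub⟩ := add_ne_zero_and_sub_ne_zero_of_sq_ne_sq h
  have h2 : (2 : 𝕜) ≠ 0 := two_ne_zero
  simp only [diagonalCubicIntegral, isotonicVirialRate, sq_sub_sq]
  field_simp
  ring

end Separation

section Wronskian

variable {𝕜 𝔸 : Type*} [NontriviallyNormedField 𝕜] [NormedCommRing 𝔸] [NormedAlgebra 𝕜 𝔸]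

theorem hasDerivAt_wronskian_zero {f f' g g' : 𝕜 → 𝔸} {k : 𝔸} {t : 𝕜}
    (hf : HasDerivAt f (f' t) t) (hf' : HasDerivAt f' (k * f t) t)
    (hg : HasDerivAt g (g' t) t) (hg' : HasDerivAt g' (k * g t) t) :
    HasDerivAt (fun s => f s * g' s - f' s * g s) 0 t :=
  ((hf.fun_mul hg').fun_sub (hf'.fun_mul hg)).congr_deriv (by ring)

end Wronskian

section IsotonicOscillator

variable {𝕜 : Type*} [NontriviallyNormedField 𝕜]

/-- At time `t`, the motion `w` is away from the singularity `0` and has velocity `v`, which obeys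
Newton's equation for `isotonicPotential ω κ`. -/
structure IsIsotonicMotionAt (ω κ : 𝕜) (w v : 𝕜 → 𝕜) (t : 𝕜) : Prop where
  ne_zero : w t ≠ 0
  hasDerivAt_position : HasDerivAt w (v t) t
  hasDerivAt_velocity : HasDerivAt v (-deriv (isotonicPotential ω κ) (w t)) t

variable [NeZero (2 : 𝕜)]

theorem hasDerivAt_isotonicPotential (ω κ : 𝕜) {w : 𝕜} (hw : w ≠ 0) :
    HasDerivAt (isotonicPotential ω κ) (ω * w - κ / w ^ 3) w := by
  have h2 : (2 : 𝕜) ≠ 0 := two_ne_zero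
  have hsq := (hasDerivAt_id' w).fun_pow 2
  have hbarrier := (hasDerivAt_const w κ).fun_div (hsq.const_mul 2)
    (mul_ne_zero h2 (pow_ne_zero 2 hw))
  refine ((hsq.const_mul (ω / 2)).fun_add hbarrier).congr_deriv ?_
  field_simp
  push_cast
  ring

namespace IsIsotonicMotionAt

variable {ω κ μ t : 𝕜} {w v u u' v' : 𝕜 → 𝕜}

theorem hasDerivAt_velocity_force (h : IsIsotonicMotionAt ω κ w v t) :
    HasDerivAt v (-(ω * w t - κ / w t ^ 3)) t := by
  simpa only [(hasDerivAt_isotonicPotential ω κ h.ne_zero).deriv] using h.hasDerivAt_velocity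

theorem hasDerivAt_virial (h : IsIsotonicMotionAt ω κ w v t) :
    HasDerivAt (fun s => w s * v s) (isotonicVirialRate ω κ (w t) (v t)) t := by
  have hw := h.ne_zero
  refine (h.hasDerivAt_position.fun_mul h.hasDerivAt_velocity_force).congr_deriv ?_
  simp only [isotonicVirialRate]
  field_simp
  ring

theorem hasDerivAt_virialRate (h : IsIsotonicMotionAt ω κ w v t) :
    HasDerivAt (fun s => isotonicVirialRate ω κ (w s) (v s)) (-4 * ω * (w t * v t)) t := by
  have hw := h.ne_zero
  have hsq := h.hasDerivAt_position.fun_pow 2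
  have hbarrier := (hasDerivAt_const t κ).fun_div hsq (pow_ne_zero 2 hw)
  refine (((h.hasDerivAt_velocity_force.fun_pow 2).fun_sub (hsq.const_mul ω)).fun_add
    hbarrier).congr_deriv ?_
  field_simp
  push_cast
  ring

theorem hasDerivAt_wronskian_virial_zero (hu : IsIsotonicMotionAt ω κ u u' t)
    (hv : IsIsotonicMotionAt ω μ v v' t) :
    HasDerivAt (fun s => u s * u' s * isotonicVirialRate ω μ (v s) (v' s) -
      isotonicVirialRate ω κ (u s) (u' s) * (v s * v' s)) 0 t :=
  hasDerivAt_wronskian_zero hu.hasDerivAt_virial hu.hasDerivAt_virialRate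
    hv.hasDerivAt_virial hv.hasDerivAt_virialRate

end IsIsotonicMotionAt

end IsotonicOscillator

section DiagonalMotion

variable {𝕜 : Type*} [NontriviallyNormedField 𝕜]

/-- At time `t`, the planar motion `(x, y)` has velocity `(x', y')`, which obeys Newton's equations
for the potential `V`. -/
structure IsPlanarMotionAt (V : 𝕜 → 𝕜 → 𝕜) (x y x' y' : 𝕜 → 𝕜) (t : 𝕜) : Prop where
  hasDerivAt_fst : HasDerivAt x (x' t) t
  hasDerivAt_snd : HasDerivAt y (y' t) t
  hasDerivAt_velocity_fst : HasDerivAt x' (-deriv (fun a => V a (y t)) (x t)) t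
  hasDerivAt_velocity_snd : HasDerivAt y' (-deriv (fun b => V (x t) b) (y t)) t

variable [NeZero (2 : 𝕜)] {c₁ c₂ c₃ a b : 𝕜}

theorem deriv_diagonalPotential_fst (h : a ^ 2 ≠ b ^ 2) :
    deriv (fun a => diagonalPotential c₁ c₂ c₃ a b) a =
      (deriv (isotonicPotential (2 * c₁) (2 * c₃ - c₂)) (a + b) +
        deriv (isotonicPotential (2 * c₁) (2 * c₃ + c₂)) (a - b)) / 2 := by
  obtain ⟨hadd, hsub⟩ := add_ne_zero_and_sub_ne_zero_of_sq_ne_sq h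
  have hseparated : (fun a => diagonalPotential c₁ c₂ c₃ a b) =ᶠ[𝓝 a] fun a =>
      (isotonicPotential (2 * c₁) (2 * c₃ - c₂) (a + b) +
        isotonicPotential (2 * c₁) (2 * c₃ + c₂) (a - b)) / 2 :=
    ((continuousAt_id.pow 2).eventually_ne h).mono fun _ => diagonalPotential_eq_isotonicPotential
  have hsum := (hasDerivAt_isotonicPotential (2 * c₁) (2 * c₃ - c₂)
    hadd).differentiableAt.hasDerivAt.comp_add_const a b
  have hdiff := (hasDerivAt_isotonicPotential (2 * c₁) (2 * c₃ + c₂)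
    hsub).differentiableAt.hasDerivAt.comp_sub_const a b
  exact hseparated.deriv_eq.trans ((hsum.fun_add hdiff).div_const 2).deriv

theorem deriv_diagonalPotential_snd (h : a ^ 2 ≠ b ^ 2) :
    deriv (fun b => diagonalPotential c₁ c₂ c₃ a b) b =
      (deriv (isotonicPotential (2 * c₁) (2 * c₃ - c₂)) (a + b) -
        deriv (isotonicPotential (2 * c₁) (2 * c₃ + c₂)) (a - b)) / 2 := by
  obtain ⟨hadd, hsub⟩ := add_ne_zero_and_sub_ne_zero_of_sq_ne_sq h
  have hseparated : (fun b => diagonalPotential c₁ c₂ c₃ a b) =ᶠ[𝓝 b] fun b =>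
      (isotonicPotential (2 * c₁) (2 * c₃ - c₂) (a + b) +
        isotonicPotential (2 * c₁) (2 * c₃ + c₂) (a - b)) / 2 :=
    ((continuousAt_id.pow 2).eventually_ne h.symm).mono fun _ hb =>
      diagonalPotential_eq_isotonicPotential hb.symm
  have hsum := (hasDerivAt_isotonicPotential (2 * c₁) (2 * c₃ - c₂)
    hadd).differentiableAt.hasDerivAt.comp_const_add a b
  have hdiff := (hasDerivAt_isotonicPotential (2 * c₁) (2 * c₃ + c₂)
    hsub).differentiableAt.hasDerivAt.comp_const_sub a b
  rw [hseparated.deriv_eq, ((hsum.fun_add hdiff).div_const 2).deriv, ← sub_eq_add_neg]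

namespace IsPlanarMotionAt

variable {x y x' y' : 𝕜 → 𝕜} {t : 𝕜}

theorem isIsotonicMotionAt_add (h : IsPlanarMotionAt (diagonalPotential c₁ c₂ c₃) x y x' y' t)
    (hne : x t ^ 2 ≠ y t ^ 2) :
    IsIsotonicMotionAt (2 * c₁) (2 * c₃ - c₂) (fun s => x s + y s) (fun s => x' s + y' s) t where
  ne_zero := (add_ne_zero_and_sub_ne_zero_of_sq_ne_sq hne).1
  hasDerivAt_position := h.hasDerivAt_fst.fun_add h.hasDerivAt_snd
  hasDerivAt_velocity := by
    refine (h.hasDerivAt_velocity_fst.fun_add h.hasDerivAt_velocity_snd).congr_deriv ?_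
    rw [deriv_diagonalPotential_fst hne, deriv_diagonalPotential_snd hne]
    have h2 : (2 : 𝕜) ≠ 0 := two_ne_zero
    field_simp
    ring

theorem isIsotonicMotionAt_sub (h : IsPlanarMotionAt (diagonalPotential c₁ c₂ c₃) x y x' y' t)
    (hne : x t ^ 2 ≠ y t ^ 2) :
    IsIsotonicMotionAt (2 * c₁) (2 * c₃ + c₂) (fun s => x s - y s) (fun s => x' s - y' s) t where
  ne_zero := (add_ne_zero_and_sub_ne_zero_of_sq_ne_sq hne).2
  hasDerivAt_position := h.hasDerivAt_fst.fun_sub h.hasDerivAt_snd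
  hasDerivAt_velocity := by
    refine (h.hasDerivAt_velocity_fst.fun_sub h.hasDerivAt_velocity_snd).congr_deriv ?_
    rw [deriv_diagonalPotential_fst hne, deriv_diagonalPotential_snd hne]
    have h2 : (2 : 𝕜) ≠ 0 := two_ne_zero
    field_simp
    ring

theorem hasDerivAt_diagonalCubicIntegral_zero
    (h : IsPlanarMotionAt (diagonalPotential c₁ c₂ c₃) x y x' y' t) (hne : x t ^ 2 ≠ y t ^ 2) :
    HasDerivAt (fun s => diagonalCubicIntegral c₁ c₂ c₃ (x s) (y s) (x' s) (y' s)) 0 t := by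
  have hwronskian := ((h.isIsotonicMotionAt_add hne).hasDerivAt_wronskian_virial_zero
    (h.isIsotonicMotionAt_sub hne)).div_const 2
  rw [zero_div] at hwronskian
  have hne_near : ∀ᶠ s in 𝓝 t, x s ^ 2 ≠ y s ^ 2 :=
    ((h.hasDerivAt_fst.continuousAt.pow 2).ne_iff_eventually_ne
      (h.hasDerivAt_snd.continuousAt.pow 2)).1 hne
  exact hwronskian.congr_of_eventuallyEq <| hne_near.mono fun s hs =>
    diagonalCubicIntegral_eq_wronskian_virial hs (x' s) (y' s)

end IsPlanarMotionAt

end DiagonalMotion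

theorem stmt_10_general {𝕜 : Type*} [RCLike 𝕜] {c₁ c₂ c₃ : 𝕜} {x y x' y' : 𝕜 → 𝕜} {s : Set 𝕜}
    (hs : IsOpen s) (hsc : IsPreconnected s)
    (hmotion : ∀ t ∈ s, IsPlanarMotionAt (diagonalPotential c₁ c₂ c₃) x y x' y' t)
    (hne : ∀ t ∈ s, x t ^ 2 ≠ y t ^ 2) {t₁ t₂ : 𝕜} (ht₁ : t₁ ∈ s) (ht₂ : t₂ ∈ s) :
    diagonalCubicIntegral c₁ c₂ c₃ (x t₁) (y t₁) (x' t₁) (y' t₁) =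
      diagonalCubicIntegral c₁ c₂ c₃ (x t₂) (y t₂) (x' t₂) (y' t₂) := by
  have hderiv := fun t ht => (hmotion t ht).hasDerivAt_diagonalCubicIntegral_zero (hne t ht)
  exact hs.is_const_of_deriv_eq_zero hsc
    (fun t ht => (hderiv t ht).differentiableAt.differentiableWithinAt)
    (fun t ht => (hderiv t ht).deriv) ht₁ ht₂

theorem stmt_10 (c₁ c₂ c₃ : ℝ) (x y x' y' x'' y'' : ℝ → ℝ) (V : ℝ → ℝ → ℝ) (J : ℝ → ℝ)
    (hV : ∀ a b : ℝ, V a b = c₁ * (a ^ 2 + b ^ 2) +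
      (c₂ * a * b + c₃ * (a ^ 2 + b ^ 2)) / (a ^ 2 - b ^ 2) ^ 2)
    (hx : ∀ t, HasDerivAt x (x' t) t)
    (hy : ∀ t, HasDerivAt y (y' t) t)
    (hx' : ∀ t, HasDerivAt x' (x'' t) t)
    (hy' : ∀ t, HasDerivAt y' (y'' t) t)
    (hne : ∀ t, x t ^ 2 ≠ y t ^ 2)
    (heqx : ∀ t, x'' t = - deriv (fun a => V a (y t)) (x t))
    (heqy : ∀ t, y'' t = - deriv (fun b => V (x t) b) (y t))
    (hJ : ∀ t, J t =
      (x t * y' t - y t * x' t) * (y' t ^ 2 - x' t ^ 2) -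
      2 * c₁ * (x t * y' t - y t * x' t) * (x t ^ 2 - y t ^ 2) +
      x t * (x t ^ 2 + 3 * y t ^ 2) * (c₂ * x' t + 2 * c₃ * y' t) / (x t ^ 2 - y t ^ 2) ^ 2 +
      y t * (3 * x t ^ 2 + y t ^ 2) * (2 * c₃ * x' t + c₂ * y' t) / (x t ^ 2 - y t ^ 2) ^ 2) :
    ∀ t₁ t₂ : ℝ, J t₁ = J t₂ := by
  obtain rfl : V = diagonalPotential c₁ c₂ c₃ := funext₂ hV
  intro t₁ t₂
  rw [hJ, hJ]
  exact stmt_10_general isOpen_univ isPreconnected_univ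
    (fun t _ => ⟨hx t, hy t, heqx t ▸ hx' t, heqy t ▸ hy' t⟩) (fun t _ => hne t)
    (Set.mem_univ t₁) (Set.mem_univ t₂)
end

section
/- Let a₂, a₅, k₁, k₂, k₃ be real constants and write r = √(x² + y²). Suppose x, y : ℝ → ℝ are twice differentiable with r(t) > 0 and a₂·y(t) − a₅·x(t) ≠ 0 for all t, and satisfy the Newtonian equations of motion for the potential V(x,y) = k₁/(a₂y − a₅x)² + k₂/r + k₃(a₂x + a₅y)/(r(a₂y − a₅x)²). Then, with L = x·y' − y·x', the cubic function J(t) = L²·(a₂x' + a₅y') + 2k₁r²(a₂x' + a₅y')/(a₂y − a₅x)² − (k₂(a₂y − a₅x)/r)·L + (k₃r/(a₂y − a₅x))·(a₂y' − a₅x') − (k₃(a₂x + a₅y)/(r(a₂y − a₅x)))·L + 2k₃(a₂x + a₅y)·r·(a₂x' + a₅y')/(a₂y − a₅x)² is constant in t. -/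
/-!
Let `c = (a₂x + a₅y) / r` and `s = (a₂y - a₅x) / r`; up to the factor `|(a₂, a₅)|` these are the
cosine and sine of the polar angle `θ` measured from `(a₂, a₅)`. The potential is
`k₂ / r + G(θ) / r²` with `G = (k₁ + k₃c) / s²`, so `Q = L² / 2 + G` is conserved, and
`J = 2Q(a₂x' + a₅y') - k₂sL + k₃r'`. Differentiating with `L' = -G_θ / r²` and
`r'' = 2Q / r³ + k₂ / r²`, everything cancels because `s G_θ + 2cG = -k₃`.
-/

namespace PlanarMotion

open ContinuousLinearMap in
/-- The Euclidean inner product on the plane. -/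
noncomputable def dot : ℝ × ℝ →L[ℝ] ℝ × ℝ →L[ℝ] ℝ :=
  (fst ℝ ℝ ℝ).smulRight (fst ℝ ℝ ℝ) + (snd ℝ ℝ ℝ).smulRight (snd ℝ ℝ ℝ)

open ContinuousLinearMap in
/-- The area form; `cross q v` is the angular momentum of a particle at `q` with velocity `v`. -/
noncomputable def cross : ℝ × ℝ →L[ℝ] ℝ × ℝ →L[ℝ] ℝ :=
  (fst ℝ ℝ ℝ).smulRight (snd ℝ ℝ ℝ) - (snd ℝ ℝ ℝ).smulRight (fst ℝ ℝ ℝ)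

/-- The Euclidean distance to the origin (the norm of `ℝ × ℝ` is the sup norm). -/
noncomputable def radius (p : ℝ × ℝ) : ℝ := √(p.1 ^ 2 + p.2 ^ 2)

/-- The cosine of the angle from `e` to `p`, multiplied by the length of `e`. -/
noncomputable def dirCos (e p : ℝ × ℝ) : ℝ := dot e p / radius p

/-- The sine of the angle from `e` to `p`, multiplied by the length of `e`. -/
noncomputable def dirSin (e p : ℝ × ℝ) : ℝ := cross e p / radius p

/-- `G` is differentiable at `p` with vanishing radial derivative and with derivative `D` with
respect to the polar angle `θ`, encoded through `dθ = (x dy - y dx) / r²`. -/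
def HasAngularDerivAt (G : ℝ × ℝ → ℝ) (D : ℝ) (p : ℝ × ℝ) : Prop :=
  HasFDerivAt G ((D / radius p ^ 2) • cross p) p

/-- The potential `h(r) + G / r²`, which separates in polar coordinates when `G` depends on the
angle only. -/
noncomputable def separablePotential (h : ℝ → ℝ) (G : ℝ × ℝ → ℝ) (p : ℝ × ℝ) : ℝ :=
  h (radius p) + G p / radius p ^ 2

/-- At time `t`, the curve `q` with velocity `v` obeys Newton's equations for the potential `V`,
whose partial derivatives read `0` where they do not exist. -/
structure IsNewtonianAt (V : ℝ × ℝ → ℝ) (q v : ℝ → ℝ × ℝ) (t : ℝ) : Prop where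
  hasDerivAt_position : HasDerivAt q (v t) t
  hasDerivAt_velocity : HasDerivAt v
    (-deriv (fun a => V (a, (q t).2)) (q t).1, -deriv (fun b => V ((q t).1, b)) (q t).2) t

/-- The separation constant `L² / 2 + G` of a potential `h(r) + G / r²`. -/
noncomputable def angularIntegral (G : ℝ × ℝ → ℝ) (q v : ℝ × ℝ) : ℝ :=
  cross q v ^ 2 / 2 + G q

/-- The cubic integral `2 Q (e · v) - k s L + κ r'` of a potential `k / r + G / r²`, where `Q` is
the separation constant and `s` is the scaled sine of the angle from `e`. -/
noncomputable def cubicIntegral (e : ℝ × ℝ) (k κ : ℝ) (G : ℝ × ℝ → ℝ) (q v : ℝ × ℝ) : ℝ :=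
  2 * angularIntegral G q v * dot e v - k * dirSin e q * cross q v + κ * (dot q v / radius q)

/-- The solution `G = (k₁ + κ c) / s²` of the equation `s G_θ + 2 c G = -κ`, where `c` and `s` are
the scaled cosine and sine of the angle from `e`. -/
noncomputable def angularProfile (e : ℝ × ℝ) (k₁ κ : ℝ) (p : ℝ × ℝ) : ℝ :=
  (k₁ + κ * dirCos e p) / dirSin e p ^ 2

lemma dot_apply (p v : ℝ × ℝ) : dot p v = p.1 * v.1 + p.2 * v.2 := by simp [dot]

lemma cross_apply (p v : ℝ × ℝ) : cross p v = p.1 * v.2 - p.2 * v.1 := by simp [cross]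

lemma radius_sq (p : ℝ × ℝ) : radius p ^ 2 = p.1 ^ 2 + p.2 ^ 2 :=
  Real.sq_sqrt (by positivity)

lemma radius_eq_zero {p : ℝ × ℝ} : radius p = 0 ↔ p = 0 := by
  rw [radius, Real.sqrt_eq_zero (by positivity), add_eq_zero_iff_of_nonneg (by positivity)
    (by positivity), sq_eq_zero_iff, sq_eq_zero_iff, Prod.ext_iff]
  rfl

lemma radius_ne_zero_of_cross_ne_zero {e p : ℝ × ℝ} (hu : cross e p ≠ 0) : radius p ≠ 0 := by
  intro hr
  exact hu (by rw [radius_eq_zero.mp hr, map_zero])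

lemma radius_sq_mul_dot (e p v : ℝ × ℝ) :
    radius p ^ 2 * dot e v = dot e p * dot p v - cross e p * cross p v := by
  simp only [radius_sq, dot_apply, cross_apply]
  ring

lemma radius_sq_mul_cross (e p v : ℝ × ℝ) :
    radius p ^ 2 * cross e v = cross e p * dot p v + dot e p * cross p v := by
  simp only [radius_sq, dot_apply, cross_apply]
  ring

lemma hasFDerivAt_div {𝕜 E : Type*} [NontriviallyNormedField 𝕜] [NormedAddCommGroup E]
    [NormedSpace 𝕜 E] {f g : E → 𝕜} {f' g' : E →L[𝕜] 𝕜} {z : E} (hf : HasFDerivAt f f' z)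
    (hg : HasFDerivAt g g' z) (hz : g z ≠ 0) :
    HasFDerivAt (fun w => f w / g w) ((g z ^ 2)⁻¹ • (g z • f' - f z • g')) z := by
  simp only [div_eq_mul_inv]
  refine (hf.fun_mul ((hasDerivAt_inv hz).comp_hasFDerivAt z hg)).congr_fderiv
    (ContinuousLinearMap.ext fun v => ?_)
  simp only [Function.comp_apply, add_apply, sub_apply, smul_apply, smul_eq_mul]
  field_simp
  ring

section Derivatives

variable {p : ℝ × ℝ} {G : ℝ × ℝ → ℝ} {D : ℝ}

lemma hasFDerivAt_radius (hr : radius p ≠ 0) :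
    HasFDerivAt radius ((radius p)⁻¹ • dot p) p := by
  have hsq : HasFDerivAt (fun z : ℝ × ℝ => z.1 ^ 2 + z.2 ^ 2) ((2 : ℝ) • dot p) p := by
    refine (((hasFDerivAt_fst (𝕜 := ℝ) (p := p)).pow 2).add
      ((hasFDerivAt_snd (𝕜 := ℝ) (p := p)).pow 2)).congr_fderiv ?_
    ext <;> simp [dot_apply]
  refine (hsq.sqrt (radius_sq p ▸ pow_ne_zero 2 hr)).congr_fderiv ?_
  rw [smul_smul, radius]
  congr 1
  field_simp

lemma hasAngularDerivAt_dirCos (e : ℝ × ℝ) (hr : radius p ≠ 0) :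
    HasAngularDerivAt (dirCos e) (-dirSin e p) p := by
  refine (hasFDerivAt_div (dot e).hasFDerivAt (hasFDerivAt_radius hr) hr).congr_fderiv
    (ContinuousLinearMap.ext fun v => ?_)
  simp only [smul_apply, sub_apply, smul_eq_mul, dirSin]
  field_simp
  linear_combination radius_sq_mul_dot e p v

lemma hasAngularDerivAt_dirSin (e : ℝ × ℝ) (hr : radius p ≠ 0) :
    HasAngularDerivAt (dirSin e) (dirCos e p) p := by
  refine (hasFDerivAt_div (cross e).hasFDerivAt (hasFDerivAt_radius hr) hr).congr_fderiv
    (ContinuousLinearMap.ext fun v => ?_)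
  simp only [smul_apply, sub_apply, smul_eq_mul, dirCos]
  field_simp
  linear_combination radius_sq_mul_cross e p v

lemma hasAngularDerivAt_angularProfile {e : ℝ × ℝ} (k₁ κ : ℝ) (hs : dirSin e p ≠ 0)
    (hr : radius p ≠ 0) :
    HasAngularDerivAt (angularProfile e k₁ κ)
      (-(κ + 2 * dirCos e p * angularProfile e k₁ κ p) / dirSin e p) p := by
  have hc := ((hasAngularDerivAt_dirCos e hr).const_mul κ).const_add k₁
  have hs' : HasFDerivAt (dirSin e) _ p := hasAngularDerivAt_dirSin e hr
  refine (hasFDerivAt_div hc (hs'.pow 2) (pow_ne_zero 2 hs)).congr_fderiv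
    (ContinuousLinearMap.ext fun v => ?_)
  simp only [Nat.add_one_sub_one, pow_one, nsmul_eq_mul, Nat.cast_ofNat, smul_apply, sub_apply,
    smul_eq_mul, angularProfile]
  field_simp
  ring

lemma hasFDerivAt_separablePotential {h : ℝ → ℝ} {h' : ℝ} (hr : radius p ≠ 0)
    (hh : HasDerivAt h h' (radius p)) (hG : HasAngularDerivAt G D p) :
    HasFDerivAt (separablePotential h G)
      ((h' / radius p - 2 * G p / radius p ^ 4) • dot p + (D / radius p ^ 4) • cross p) p := by
  have hrad := hasFDerivAt_radius hr
  refine ((hh.comp_hasFDerivAt p hrad).add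
    (hasFDerivAt_div hG (hrad.pow 2) (pow_ne_zero 2 hr))).congr_fderiv
    (ContinuousLinearMap.ext fun v => ?_)
  simp only [Nat.add_one_sub_one, pow_one, nsmul_eq_mul, Nat.cast_ofNat, add_apply, smul_apply,
    smul_eq_mul, sub_apply]
  field_simp
  ring

lemma HasAngularDerivAt.comp_hasDerivAt {q : ℝ → ℝ × ℝ} {q' : ℝ × ℝ} {t : ℝ}
    (hG : HasAngularDerivAt G D (q t)) (hq : HasDerivAt q q' t) :
    HasDerivAt (fun τ => G (q τ)) (D / radius (q t) ^ 2 * cross (q t) q') t :=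
  HasFDerivAt.comp_hasDerivAt t hG hq

end Derivatives

lemma hasDerivAt_dot_div_radius {q v : ℝ → ℝ × ℝ} {A : ℝ × ℝ} {t : ℝ}
    (hr : radius (q t) ≠ 0) (hq : HasDerivAt q (v t) t) (hv : HasDerivAt v A t) :
    HasDerivAt (fun τ => dot (q τ) (v τ) / radius (q τ))
      (cross (q t) (v t) ^ 2 / radius (q t) ^ 3 + dot (q t) A / radius (q t)) t := by
  have hrad : HasDerivAt (fun τ => radius (q τ)) ((radius (q t))⁻¹ * dot (q t) (v t)) t :=
    (hasFDerivAt_radius hr).comp_hasDerivAt t hq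
  refine ((dot.hasDerivAt_of_bilinear (fun _ => hq) fun _ => hv).fun_div hrad hr).congr_deriv ?_
  have lagrange : radius (q t) ^ 2 * dot (v t) (v t) =
      dot (q t) (v t) ^ 2 + cross (q t) (v t) ^ 2 := by
    simp only [radius_sq, dot_apply, cross_apply]
    ring
  field_simp
  linear_combination lagrange

namespace IsNewtonianAt

variable {V : ℝ × ℝ → ℝ} {q v : ℝ → ℝ × ℝ} {t : ℝ}

lemma hasDerivAt_velocity_of_hasFDerivAt (hN : IsNewtonianAt V q v t) {V' : ℝ × ℝ →L[ℝ] ℝ}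
    (hV : HasFDerivAt V V' (q t)) :
    HasDerivAt v (-V' (1, 0), -V' (0, 1)) t := by
  have h₁ : HasDerivAt (fun a => V (a, (q t).2)) (V' (1, 0)) (q t).1 :=
    hV.comp_hasDerivAt (q t).1 ((hasDerivAt_id _).prodMk (hasDerivAt_const _ _))
  have h₂ : HasDerivAt (fun b => V ((q t).1, b)) (V' (0, 1)) (q t).2 :=
    hV.comp_hasDerivAt (q t).2 ((hasDerivAt_const _ _).prodMk (hasDerivAt_id _))
  simpa only [h₁.deriv, h₂.deriv] using hN.hasDerivAt_velocity

section Separable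

variable {h : ℝ → ℝ} {h' : ℝ} {G : ℝ × ℝ → ℝ} {D : ℝ}

lemma hasDerivAt_velocity_separable (hN : IsNewtonianAt (separablePotential h G) q v t)
    (hr : radius (q t) ≠ 0) (hh : HasDerivAt h h' (radius (q t)))
    (hG : HasAngularDerivAt G D (q t)) :
    HasDerivAt v ((2 * G (q t) / radius (q t) ^ 4 - h' / radius (q t)) • q t +
      (D / radius (q t) ^ 4) • ((q t).2, -(q t).1)) t := by
  refine (hN.hasDerivAt_velocity_of_hasFDerivAt
    (hasFDerivAt_separablePotential hr hh hG)).congr_deriv ?_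
  ext <;> simp [dot_apply, cross_apply] <;> ring

lemma hasDerivAt_angularMomentum (hN : IsNewtonianAt (separablePotential h G) q v t)
    (hr : radius (q t) ≠ 0) (hh : HasDerivAt h h' (radius (q t)))
    (hG : HasAngularDerivAt G D (q t)) :
    HasDerivAt (fun τ => cross (q τ) (v τ)) (-D / radius (q t) ^ 2) t := by
  refine (cross.hasDerivAt_of_bilinear (fun _ => hN.hasDerivAt_position)
    fun _ => hN.hasDerivAt_velocity_separable hr hh hG).congr_deriv ?_
  have hself : ∀ p, cross p p = 0 := fun p => by rw [cross_apply]; ring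
  have hrot : cross (q t) ((q t).2, -(q t).1) = -radius (q t) ^ 2 := by
    rw [radius_sq, cross_apply]; ring
  rw [map_add, map_smul, map_smul, hself, hself, hrot]
  simp only [smul_eq_mul]
  field_simp
  ring

lemma hasDerivAt_radialVelocity (hN : IsNewtonianAt (separablePotential h G) q v t)
    (hr : radius (q t) ≠ 0) (hh : HasDerivAt h h' (radius (q t)))
    (hG : HasAngularDerivAt G D (q t)) :
    HasDerivAt (fun τ => dot (q τ) (v τ) / radius (q τ))
      (2 * angularIntegral G (q t) (v t) / radius (q t) ^ 3 - h') t := by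
  refine (hasDerivAt_dot_div_radius hr hN.hasDerivAt_position
    (hN.hasDerivAt_velocity_separable hr hh hG)).congr_deriv ?_
  have hsq : dot (q t) (q t) = radius (q t) ^ 2 := by rw [radius_sq, dot_apply]; ring
  have horth : dot (q t) ((q t).2, -(q t).1) = 0 := by rw [dot_apply]; ring
  rw [map_add, map_smul, map_smul, hsq, horth, angularIntegral]
  simp only [smul_eq_mul]
  field_simp
  ring

lemma hasDerivAt_dot_velocity (e : ℝ × ℝ) (hN : IsNewtonianAt (separablePotential h G) q v t)
    (hr : radius (q t) ≠ 0) (hh : HasDerivAt h h' (radius (q t)))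
    (hG : HasAngularDerivAt G D (q t)) :
    HasDerivAt (fun τ => dot e (v τ)) ((2 * dirCos e (q t) * G (q t) + dirSin e (q t) * D) /
      radius (q t) ^ 3 - h' * dirCos e (q t)) t := by
  refine ((dot e).hasFDerivAt.comp_hasDerivAt t
    (hN.hasDerivAt_velocity_separable hr hh hG)).congr_deriv ?_
  have hrot : dot e ((q t).2, -(q t).1) = cross e (q t) := by
    rw [dot_apply, cross_apply]; ring
  rw [map_add, map_smul, map_smul, hrot, dirCos, dirSin]
  simp only [smul_eq_mul]
  field_simp
  ring

lemma hasDerivAt_angularIntegral (hN : IsNewtonianAt (separablePotential h G) q v t)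
    (hr : radius (q t) ≠ 0) (hh : HasDerivAt h h' (radius (q t)))
    (hG : HasAngularDerivAt G D (q t)) :
    HasDerivAt (fun τ => angularIntegral G (q τ) (v τ)) 0 t := by
  have hL := hN.hasDerivAt_angularMomentum hr hh hG
  refine (((hL.fun_pow 2).div_const 2).fun_add
    (hG.comp_hasDerivAt hN.hasDerivAt_position)).congr_deriv ?_
  field_simp
  ring

end Separable

theorem hasDerivAt_cubicIntegral {e : ℝ × ℝ} {k κ D : ℝ} {G : ℝ × ℝ → ℝ}
    (hN : IsNewtonianAt (separablePotential (fun ρ => k / ρ) G) q v t)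
    (hr : radius (q t) ≠ 0) (hG : HasAngularDerivAt G D (q t))
    (hode : dirSin e (q t) * D + 2 * dirCos e (q t) * G (q t) = -κ) :
    HasDerivAt (fun τ => cubicIntegral e k κ G (q τ) (v τ)) 0 t := by
  have hh : HasDerivAt (fun ρ => k / ρ) (-k / radius (q t) ^ 2) (radius (q t)) := by
    simpa using (hasDerivAt_const _ k).fun_div (hasDerivAt_id' (radius (q t))) hr
  have hQ := hN.hasDerivAt_angularIntegral hr hh hG
  have hP := hN.hasDerivAt_dot_velocity e hr hh hG
  have hs := (hasAngularDerivAt_dirSin e hr).comp_hasDerivAt hN.hasDerivAt_position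
  have hL := hN.hasDerivAt_angularMomentum hr hh hG
  have hR := hN.hasDerivAt_radialVelocity hr hh hG
  refine ((((hQ.const_mul 2).fun_mul hP).fun_sub ((hs.const_mul k).fun_mul hL)).fun_add
    (hR.const_mul κ)).congr_deriv ?_
  rw [angularIntegral]
  field_simp
  linear_combination (cross (q t) (v t) ^ 2 + 2 * G (q t) + k * radius (q t)) * hode

theorem hasDerivAt_cubicIntegral_angularProfile {e : ℝ × ℝ} {k₁ k₂ k₃ : ℝ}
    (hN : IsNewtonianAt (separablePotential (fun ρ => k₂ / ρ) (angularProfile e k₁ k₃)) q v t)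
    (hu : cross e (q t) ≠ 0) :
    HasDerivAt (fun τ => cubicIntegral e k₂ k₃ (angularProfile e k₁ k₃) (q τ) (v τ)) 0 t := by
  have hr : radius (q t) ≠ 0 := radius_ne_zero_of_cross_ne_zero hu
  have hs : dirSin e (q t) ≠ 0 := div_ne_zero hu hr
  refine hN.hasDerivAt_cubicIntegral hr (hasAngularDerivAt_angularProfile k₁ k₃ hs hr) ?_
  field_simp
  ring

end IsNewtonianAt

lemma separablePotential_angularProfile (e p : ℝ × ℝ) (k₁ k₂ k₃ : ℝ) :
    separablePotential (fun ρ => k₂ / ρ) (angularProfile e k₁ k₃) p =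
      k₁ / cross e p ^ 2 + k₂ / radius p + k₃ * dot e p / (radius p * cross e p ^ 2) := by
  rw [separablePotential, angularProfile, dirCos, dirSin]
  -- On the line `cross e p = 0`, division by zero turns both sides into `k₂ / r`.
  by_cases hu : cross e p = 0
  · simp [hu]
  have hr := radius_ne_zero_of_cross_ne_zero hu
  field_simp
  ring

lemma cubicIntegral_angularProfile {e q : ℝ × ℝ} (v : ℝ × ℝ) (k₁ k₂ k₃ : ℝ)
    (hu : cross e q ≠ 0) :
    cubicIntegral e k₂ k₃ (angularProfile e k₁ k₃) q v =
      cross q v ^ 2 * dot e v + 2 * k₁ * radius q ^ 2 * dot e v / cross e q ^ 2 -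
      (k₂ * cross e q / radius q) * cross q v + (k₃ * radius q / cross e q) * cross e v -
      (k₃ * dot e q / (radius q * cross e q)) * cross q v +
      2 * k₃ * dot e q * radius q * dot e v / cross e q ^ 2 := by
  have hr := radius_ne_zero_of_cross_ne_zero hu
  rw [cubicIntegral, angularIntegral, angularProfile, dirCos, dirSin]
  field_simp
  linear_combination -k₃ * cross e q * radius_sq_mul_cross e q v

end PlanarMotion

open PlanarMotion

theorem stmt_13 (a₂ a₅ k₁ k₂ k₃ : ℝ) (x y x' y' x'' y'' r L : ℝ → ℝ)
    (V : ℝ → ℝ → ℝ) (J : ℝ → ℝ)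
    (hV : ∀ a b : ℝ, V a b =
      k₁ / (a₂ * b - a₅ * a) ^ 2 +
      k₂ / Real.sqrt (a ^ 2 + b ^ 2) +
      k₃ * (a₂ * a + a₅ * b) / (Real.sqrt (a ^ 2 + b ^ 2) * (a₂ * b - a₅ * a) ^ 2))
    (hr : ∀ t, r t = Real.sqrt (x t ^ 2 + y t ^ 2))
    (hL : ∀ t, L t = x t * y' t - y t * x' t)
    (hx : ∀ t, HasDerivAt x (x' t) t)
    (hy : ∀ t, HasDerivAt y (y' t) t)
    (hx' : ∀ t, HasDerivAt x' (x'' t) t)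
    (hy' : ∀ t, HasDerivAt y' (y'' t) t)
    (hrpos : ∀ t, 0 < r t)
    (hne : ∀ t, a₂ * y t - a₅ * x t ≠ 0)
    (heqx : ∀ t, x'' t = - deriv (fun a => V a (y t)) (x t))
    (heqy : ∀ t, y'' t = - deriv (fun b => V (x t) b) (y t))
    (hJ : ∀ t, J t =
      L t ^ 2 * (a₂ * x' t + a₅ * y' t) +
      2 * k₁ * r t ^ 2 * (a₂ * x' t + a₅ * y' t) / (a₂ * y t - a₅ * x t) ^ 2 -
      (k₂ * (a₂ * y t - a₅ * x t) / r t) * L t +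
      (k₃ * r t / (a₂ * y t - a₅ * x t)) * (a₂ * y' t - a₅ * x' t) -
      (k₃ * (a₂ * x t + a₅ * y t) / (r t * (a₂ * y t - a₅ * x t))) * L t +
      2 * k₃ * (a₂ * x t + a₅ * y t) * r t * (a₂ * x' t + a₅ * y' t) /
        (a₂ * y t - a₅ * x t) ^ 2) :
    ∀ t₁ t₂ : ℝ, J t₁ = J t₂ := by
  have hu : ∀ t, cross (a₂, a₅) (x t, y t) ≠ 0 := fun t => by
    rw [cross_apply]
    exact hne t
  have hV' : ∀ a b, V a b = separablePotential (fun ρ => k₂ / ρ)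
      (angularProfile (a₂, a₅) k₁ k₃) (a, b) := fun a b => by
    rw [hV, separablePotential_angularProfile, cross_apply, dot_apply, radius]
  have hJ' : J = fun t => cubicIntegral (a₂, a₅) k₂ k₃ (angularProfile (a₂, a₅) k₁ k₃)
      (x t, y t) (x' t, y' t) := funext fun t => by
    rw [hJ, cubicIntegral_angularProfile _ _ _ _ (hu t), hr, hL]
    simp only [cross_apply, dot_apply, radius]
  have hN : ∀ t, IsNewtonianAt (separablePotential (fun ρ => k₂ / ρ)
      (angularProfile (a₂, a₅) k₁ k₃)) (fun τ => (x τ, y τ)) (fun τ => (x' τ, y' τ)) t := fun t =>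
    ⟨(hx t).prodMk (hy t), by simpa only [heqx, heqy, hV'] using (hx' t).prodMk (hy' t)⟩
  have hJderiv : ∀ t, HasDerivAt J 0 t := fun t =>
    hJ' ▸ (hN t).hasDerivAt_cubicIntegral_angularProfile (hu t)
  exact is_const_of_deriv_eq_zero (fun t => (hJderiv t).differentiableAt)
    fun t => (hJderiv t).deriv
end

section
/- Let k₁, k₂, k₃ be real constants and write r = √(x² + y²). Suppose x, y : ℝ → ℝ are twice differentiable with r(t) > 0 and y(t) ≠ 0 for all t, and satisfy the Newtonian equations of motion for the potential V(x,y) = k₁/y² + k₂/r + k₃·x/(r·y²). Then, with L = x·y' − y·x', the cubic function J(t) = x'·L² − (k₂·y/r)·L + (2k₁r²/y²)·x' + (k₃·x(2x² + 3y²)/(r·y²))·x' + (k₃·y/r)·y' is constant in t. -/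
/-!
Write `V = k₂ / r + W`, where `W = k₁ / y² + k₃ x / (r y²)` is homogeneous of degree `-2`.
The first term is central, so `I = L² + 2 r² W` is conserved. Since `2 x² + 3 y² = 2 r² + y²`,
`J = x' I - k₂ (y / r) L + k₃ r'`. Moreover `x'' = (k₂ x - k₃) / r³`, `(y / r)' = x L / r³` and
`r'' = I / r³ + k₂ / r²`, so that in `J'` everything cancels except
`k₂ (2 x W / r - (y / r) L' + k₃ / r²)`, which vanishes because the torque satisfies
`y L' = 2 x W + k₃ / r`.
-/

/-- The distance `r` from the point `(a, b)` of the Euclidean plane to the origin. -/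
noncomputable def planeRadius (a b : ℝ) : ℝ := √(a ^ 2 + b ^ 2)

/-- The angular momentum `L` about the origin of a unit mass at `(a, b)` with velocity `(u, v)`. -/
def planeAngularMomentum (a b u v : ℝ) : ℝ := a * v - b * u

lemma planeRadius_sq (a b : ℝ) : planeRadius a b ^ 2 = a ^ 2 + b ^ 2 :=
  Real.sq_sqrt (by positivity)

lemma planeRadius_ne_zero_of_right {a b : ℝ} (hb : b ≠ 0) : planeRadius a b ≠ 0 :=
  (Real.sqrt_pos.2 (by positivity)).ne'

section PlaneCurve

variable {x y : ℝ → ℝ} {u v t : ℝ}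

lemma hasDerivAt_planeRadius (hx : HasDerivAt x u t) (hy : HasDerivAt y v t)
    (hr : planeRadius (x t) (y t) ≠ 0) :
    HasDerivAt (fun s ↦ planeRadius (x s) (y s))
      ((x t * u + y t * v) / planeRadius (x t) (y t)) t := by
  have hsq : x t ^ 2 + y t ^ 2 ≠ 0 := planeRadius_sq (x t) (y t) ▸ pow_ne_zero 2 hr
  refine (((hx.fun_pow 2).fun_add (hy.fun_pow 2)).sqrt hsq).congr_deriv ?_
  rw [← planeRadius]
  field_simp
  ring

lemma hasDerivAt_div_planeRadius (hx : HasDerivAt x u t) (hy : HasDerivAt y v t)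
    (hr : planeRadius (x t) (y t) ≠ 0) :
    HasDerivAt (fun s ↦ y s / planeRadius (x s) (y s))
      (x t * planeAngularMomentum (x t) (y t) u v / planeRadius (x t) (y t) ^ 3) t := by
  refine (hy.fun_div (hasDerivAt_planeRadius hx hy hr) hr).congr_deriv ?_
  unfold planeAngularMomentum
  field_simp
  linear_combination v * planeRadius_sq (x t) (y t)

end PlaneCurve

section PlaneMotion

variable {x y x' y' : ℝ → ℝ} {a b t : ℝ}

lemma hasDerivAt_planeAngularMomentum (hx : HasDerivAt x (x' t) t) (hy : HasDerivAt y (y' t) t)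
    (hx' : HasDerivAt x' a t) (hy' : HasDerivAt y' b t) :
    HasDerivAt (fun s ↦ planeAngularMomentum (x s) (y s) (x' s) (y' s)) (x t * b - y t * a) t :=
  ((hx.fun_mul hy').fun_sub (hy.fun_mul hx')).congr_deriv (by ring)

lemma hasDerivAt_radialVelocity (hx : HasDerivAt x (x' t) t) (hy : HasDerivAt y (y' t) t)
    (hx' : HasDerivAt x' a t) (hy' : HasDerivAt y' b t) (hr : planeRadius (x t) (y t) ≠ 0) :
    HasDerivAt (fun s ↦ (x s * x' s + y s * y' s) / planeRadius (x s) (y s))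
      (planeAngularMomentum (x t) (y t) (x' t) (y' t) ^ 2 / planeRadius (x t) (y t) ^ 3
        + (x t * a + y t * b) / planeRadius (x t) (y t)) t := by
  have hdot := (hx.fun_mul hx').fun_add (hy.fun_mul hy')
  refine (hdot.fun_div (hasDerivAt_planeRadius hx hy hr) hr).congr_deriv ?_
  unfold planeAngularMomentum
  field_simp
  linear_combination (x' t ^ 2 + y' t ^ 2) * planeRadius_sq (x t) (y t)

/-- `w` is a potential evaluated along the motion and `(p, q)` is its gradient at time `t`; the
force `(a, b)` may differ from `-(p, q)` by an arbitrary central force. -/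
lemma hasDerivAt_sq_planeAngularMomentum_add_of_euler {w : ℝ → ℝ} {p q : ℝ}
    (hx : HasDerivAt x (x' t) t) (hy : HasDerivAt y (y' t) t)
    (hx' : HasDerivAt x' a t) (hy' : HasDerivAt y' b t)
    (hw : HasDerivAt w (p * x' t + q * y' t) t)
    (euler : x t * p + y t * q = -2 * w t)
    (torque : x t * b - y t * a = -(x t * q - y t * p)) :
    HasDerivAt (fun s ↦ planeAngularMomentum (x s) (y s) (x' s) (y' s) ^ 2
      + 2 * planeRadius (x s) (y s) ^ 2 * w s) 0 t := by
  have hL := hasDerivAt_planeAngularMomentum hx hy hx' hy'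
  have hrSq := (hx.fun_pow 2).fun_add (hy.fun_pow 2)
  simp only [planeRadius_sq]
  refine ((hL.fun_pow 2).fun_add ((hrSq.const_mul 2).fun_mul hw)).congr_deriv ?_
  rw [torque]
  unfold planeAngularMomentum
  linear_combination 2 * (x t * x' t + y t * y' t) * euler

end PlaneMotion

/-- The potential `V = k₁ / y² + k₂ / r + k₃ x / (r y²)`. Its part that is homogeneous of degree
`-2` is obtained by setting `k₂ = 0`. -/
noncomputable def potential (k₁ k₂ k₃ a b : ℝ) : ℝ :=
  k₁ / b ^ 2 + k₂ / planeRadius a b + k₃ * a / (planeRadius a b * b ^ 2)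

namespace potential

/-- The component `-∂V/∂x` of the force derived from the potential, simplified by means of
`r² - x² = y²`. -/
noncomputable def forceX (k₂ k₃ a b : ℝ) : ℝ := (k₂ * a - k₃) / planeRadius a b ^ 3

/-- The component `-∂V/∂y` of the force derived from the potential. -/
noncomputable def forceY (k₁ k₂ k₃ a b : ℝ) : ℝ :=
  2 * k₁ / b ^ 3 + k₂ * b / planeRadius a b ^ 3
    + k₃ * a / (planeRadius a b ^ 3 * b) + 2 * k₃ * a / (planeRadius a b * b ^ 3)

variable (k₁ k₂ k₃ : ℝ) {x y x' y' : ℝ → ℝ} {a b u v t : ℝ}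

lemma virial (hb : b ≠ 0) :
    a * forceX k₂ k₃ a b + b * forceY k₁ k₂ k₃ a b
      = k₂ / planeRadius a b + 2 * potential k₁ 0 k₃ a b := by
  have hr : planeRadius a b ≠ 0 := planeRadius_ne_zero_of_right hb
  unfold forceX forceY potential
  field_simp
  linear_combination -(k₂ * b ^ 2) * planeRadius_sq a b

lemma mul_torque (hb : b ≠ 0) :
    b * (a * forceY k₁ k₂ k₃ a b - b * forceX k₂ k₃ a b)
      = 2 * a * potential k₁ 0 k₃ a b + k₃ / planeRadius a b := by
  have hr : planeRadius a b ≠ 0 := planeRadius_ne_zero_of_right hb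
  unfold forceX forceY potential
  field_simp
  linear_combination -(k₃ * b ^ 2) * planeRadius_sq a b

lemma torque_eq_torque_homogeneousPart :
    a * forceY k₁ k₂ k₃ a b - b * forceX k₂ k₃ a b
      = a * forceY k₁ 0 k₃ a b - b * forceX 0 k₃ a b := by
  unfold forceX forceY
  ring

lemma hasDerivAt_comp (hx : HasDerivAt x u t) (hy : HasDerivAt y v t) (hyt : y t ≠ 0) :
    HasDerivAt (fun s ↦ potential k₁ k₂ k₃ (x s) (y s))
      (-forceX k₂ k₃ (x t) (y t) * u + -forceY k₁ k₂ k₃ (x t) (y t) * v) t := by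
  have hr : planeRadius (x t) (y t) ≠ 0 := planeRadius_ne_zero_of_right hyt
  have hy2 : y t ^ 2 ≠ 0 := pow_ne_zero 2 hyt
  have hrad := hasDerivAt_planeRadius hx hy hr
  have hySq := hy.fun_pow 2
  have h₁ := (hasDerivAt_const t k₁).fun_div hySq hy2
  have h₂ := (hasDerivAt_const t k₂).fun_div hrad hr
  have h₃ := (hx.const_mul k₃).fun_div (hrad.fun_mul hySq) (mul_ne_zero hr hy2)
  refine ((h₁.fun_add h₂).fun_add h₃).congr_deriv ?_
  unfold forceX forceY
  field_simp
  linear_combination k₃ * u * y t ^ 2 * planeRadius_sq (x t) (y t)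

lemma neg_deriv_left (hb : b ≠ 0) :
    -deriv (fun s ↦ potential k₁ k₂ k₃ s b) a = forceX k₂ k₃ a b := by
  rw [(hasDerivAt_comp k₁ k₂ k₃ (hasDerivAt_id' a) (hasDerivAt_const a b) hb).deriv]
  simp

lemma neg_deriv_right (hb : b ≠ 0) :
    -deriv (fun s ↦ potential k₁ k₂ k₃ a s) b = forceY k₁ k₂ k₃ a b := by
  rw [(hasDerivAt_comp k₁ k₂ k₃ (hasDerivAt_const b a) (hasDerivAt_id' b) hb).deriv]
  simp

/-- The quadratic first integral `I = L² + 2 r² W`, where `W` is the part of the potential that is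
homogeneous of degree `-2`, at position `(a, b)` and velocity `(u, v)`. -/
noncomputable def quadraticIntegral (a b u v : ℝ) : ℝ :=
  planeAngularMomentum a b u v ^ 2 + 2 * planeRadius a b ^ 2 * potential k₁ 0 k₃ a b

/-- The cubic first integral, in the form `x' I - k₂ (y / r) L + k₃ r'`, at position `(a, b)` and
velocity `(u, v)`. -/
noncomputable def cubicIntegral (a b u v : ℝ) : ℝ :=
  u * quadraticIntegral k₁ k₃ a b u v - k₂ * (b / planeRadius a b * planeAngularMomentum a b u v)
    + k₃ * ((a * u + b * v) / planeRadius a b)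

lemma cubicIntegral_eq (u v : ℝ) (hb : b ≠ 0) :
    cubicIntegral k₁ k₂ k₃ a b u v =
      u * planeAngularMomentum a b u v ^ 2
        - (k₂ * b / planeRadius a b) * planeAngularMomentum a b u v
        + (2 * k₁ * planeRadius a b ^ 2 / b ^ 2) * u
        + (k₃ * a * (2 * a ^ 2 + 3 * b ^ 2) / (planeRadius a b * b ^ 2)) * u
        + (k₃ * b / planeRadius a b) * v := by
  have hr : planeRadius a b ≠ 0 := planeRadius_ne_zero_of_right hb
  unfold cubicIntegral quadraticIntegral potential
  field_simp
  linear_combination 2 * k₃ * a * u * planeRadius_sq a b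

variable {k₁ k₂ k₃}

lemma hasDerivAt_quadraticIntegral
    (hx : HasDerivAt x (x' t) t) (hy : HasDerivAt y (y' t) t)
    (hx' : HasDerivAt x' (forceX k₂ k₃ (x t) (y t)) t)
    (hy' : HasDerivAt y' (forceY k₁ k₂ k₃ (x t) (y t)) t) (hyt : y t ≠ 0) :
    HasDerivAt (fun s ↦ quadraticIntegral k₁ k₃ (x s) (y s) (x' s) (y' s)) 0 t := by
  refine hasDerivAt_sq_planeAngularMomentum_add_of_euler hx hy hx' hy'
    (hasDerivAt_comp k₁ 0 k₃ hx hy hyt) ?_ ?_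
  · linear_combination -virial k₁ 0 k₃ (a := x t) hyt
  · linear_combination torque_eq_torque_homogeneousPart k₁ k₂ k₃ (a := x t) (b := y t)

lemma hasDerivAt_cubicIntegral
    (hx : HasDerivAt x (x' t) t) (hy : HasDerivAt y (y' t) t)
    (hx' : HasDerivAt x' (forceX k₂ k₃ (x t) (y t)) t)
    (hy' : HasDerivAt y' (forceY k₁ k₂ k₃ (x t) (y t)) t) (hyt : y t ≠ 0) :
    HasDerivAt (fun s ↦ cubicIntegral k₁ k₂ k₃ (x s) (y s) (x' s) (y' s)) 0 t := by
  have hr : planeRadius (x t) (y t) ≠ 0 := planeRadius_ne_zero_of_right hyt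
  have hI := hasDerivAt_quadraticIntegral hx hy hx' hy' hyt
  have hL := hasDerivAt_planeAngularMomentum hx hy hx' hy'
  have hsin := hasDerivAt_div_planeRadius hx hy hr
  have hrad := hasDerivAt_radialVelocity hx hy hx' hy' hr
  refine (((hx'.fun_mul hI).fun_sub ((hsin.fun_mul hL).const_mul k₂)).fun_add
    (hrad.const_mul k₃)).congr_deriv ?_
  rw [virial k₁ k₂ k₃ hyt, div_mul_eq_mul_div (y t), mul_torque k₁ k₂ k₃ hyt]
  unfold forceX quadraticIntegral
  field_simp
  ring

end potential

theorem stmt_14 (k₁ k₂ k₃ : ℝ) (x y x' y' x'' y'' r L : ℝ → ℝ)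
    (V : ℝ → ℝ → ℝ) (J : ℝ → ℝ)
    (hV : ∀ a b : ℝ, V a b =
      k₁ / b ^ 2 + k₂ / Real.sqrt (a ^ 2 + b ^ 2) +
      k₃ * a / (Real.sqrt (a ^ 2 + b ^ 2) * b ^ 2))
    (hr : ∀ t, r t = Real.sqrt (x t ^ 2 + y t ^ 2))
    (hL : ∀ t, L t = x t * y' t - y t * x' t)
    (hx : ∀ t, HasDerivAt x (x' t) t)
    (hy : ∀ t, HasDerivAt y (y' t) t)
    (hx' : ∀ t, HasDerivAt x' (x'' t) t)
    (hy' : ∀ t, HasDerivAt y' (y'' t) t)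
    (hrpos : ∀ t, 0 < r t)
    (hyne : ∀ t, y t ≠ 0)
    (heqx : ∀ t, x'' t = - deriv (fun a => V a (y t)) (x t))
    (heqy : ∀ t, y'' t = - deriv (fun b => V (x t) b) (y t))
    (hJ : ∀ t, J t =
      x' t * L t ^ 2 - (k₂ * y t / r t) * L t +
      (2 * k₁ * r t ^ 2 / y t ^ 2) * x' t +
      (k₃ * x t * (2 * x t ^ 2 + 3 * y t ^ 2) / (r t * y t ^ 2)) * x' t +
      (k₃ * y t / r t) * y' t) :
    ∀ t₁ t₂ : ℝ, J t₁ = J t₂ := by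
  obtain rfl : V = potential k₁ k₂ k₃ := funext₂ hV
  have hforceX : ∀ t, HasDerivAt x' (potential.forceX k₂ k₃ (x t) (y t)) t := fun t ↦
    (hx' t).congr_deriv ((heqx t).trans (potential.neg_deriv_left k₁ k₂ k₃ (hyne t)))
  have hforceY : ∀ t, HasDerivAt y' (potential.forceY k₁ k₂ k₃ (x t) (y t)) t := fun t ↦
    (hy' t).congr_deriv ((heqy t).trans (potential.neg_deriv_right k₁ k₂ k₃ (hyne t)))
  have hJcubic : J = fun t ↦ potential.cubicIntegral k₁ k₂ k₃ (x t) (y t) (x' t) (y' t) := by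
    funext t
    rw [hJ t, hL t, hr t, potential.cubicIntegral_eq k₁ k₂ k₃ _ _ (hyne t)]
    rfl
  have hJderiv : ∀ t, HasDerivAt J 0 t := fun t ↦ by
    rw [hJcubic]
    exact potential.hasDerivAt_cubicIntegral (hx t) (hy t) (hforceX t) (hforceY t) (hyne t)
  exact is_const_of_deriv_eq_zero (fun t ↦ (hJderiv t).differentiableAt)
    (fun t ↦ (hJderiv t).deriv)
end

section
/- Let c₂, c₃ be real constants. Suppose x, y : ℝ → ℝ are twice differentiable with y(t) ≠ 0 for all t, and satisfy the Newtonian equations of motion for the potential V(x,y) = c₂/y² + c₃·x. Then the time-dependent cubic function J(t) = −t·x'·y'² + y·x'·y' − (2c₂/y²)·t·x' − c₃·t·y·y' + c₃·y² is constant in t. -/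
/-!
For a potential `W` homogeneous of degree `-2`, a motion `q'' = -∇W(q)` with energy `E` satisfies
the Lagrange–Jacobi identity `(⟪q, q'⟫)' = 2E`. Integrating it once and twice, beside `E` itself
the quantities `D = ⟪q, q'⟫ - 2tE` and `K = ‖q‖² - 2t⟪q, q'⟫ + 2t²E` are conserved. In a uniform
force field `-g` the quantity `P = x' + tg` is conserved. When the two systems are run side by side,
the cubic first integral is the combination `D P + K g`, in which the terms in `t²` cancel.
-/

open scoped Gradient RealInnerProductSpace

section

variable {F G : Type*} [NormedAddCommGroup F] [InnerProductSpace ℝ F] [CompleteSpace F]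
  [NormedAddCommGroup G] [InnerProductSpace ℝ G] [CompleteSpace G]

/-- The trajectory `q` with velocity `v` solves Newton's equation `q'' = -∇W(q)` for all times.
Differentiability of `W` along `q` is included because `∇ W` is `0` where `W` is not
differentiable. -/
structure IsNewtonianMotion_s15 (W : F → ℝ) (q v : ℝ → F) : Prop where
  differentiableAt_potential : ∀ t, DifferentiableAt ℝ W (q t)
  hasDerivAt_position : ∀ t, HasDerivAt q (v t) t
  hasDerivAt_velocity : ∀ t, HasDerivAt v (-∇ W (q t)) t

/-- The mechanical energy of a particle of unit mass at `q` with velocity `v` in the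
potential `W`. -/
noncomputable def mechanicalEnergy (W : F → ℝ) (q v : F) : ℝ := ‖v‖ ^ 2 / 2 + W q

/-- The first integral `D = ⟪q, q'⟫ - 2tE` that dilations give for potentials homogeneous of
degree `-2`. -/
noncomputable def dilationIntegral (W : F → ℝ) (q v : F) (t : ℝ) : ℝ :=
  ⟪q, v⟫ - 2 * t * mechanicalEnergy W q v

/-- The first integral `K = ‖q‖² - 2t⟪q, q'⟫ + 2t²E` that special conformal transformations of time
give for potentials homogeneous of degree `-2`. -/
noncomputable def conformalIntegral (W : F → ℝ) (q v : F) (t : ℝ) : ℝ :=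
  ‖q‖ ^ 2 - 2 * t * ⟪q, v⟫ + 2 * t ^ 2 * mechanicalEnergy W q v

namespace IsNewtonianMotion_s15

theorem of_deriv {W q v a : ℝ → ℝ} (hW : ∀ t, DifferentiableAt ℝ W (q t))
    (hq : ∀ t, HasDerivAt q (v t) t) (hv : ∀ t, HasDerivAt v (a t) t)
    (ha : ∀ t, a t = -deriv W (q t)) : IsNewtonianMotion_s15 W q v where
  differentiableAt_potential := hW
  hasDerivAt_position := hq
  hasDerivAt_velocity t := by simpa only [gradient_eq_deriv', ← ha t] using hv t

section

variable {W : F → ℝ} {q v : ℝ → F} (h : IsNewtonianMotion_s15 W q v)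
include h

theorem hasDerivAt_potential_comp (t : ℝ) :
    HasDerivAt (fun s => W (q s)) ⟪∇ W (q t), v t⟫ t := by
  have hW := (h.differentiableAt_potential t).hasGradientAt.hasFDerivAt
  exact hW.comp_hasDerivAt t (h.hasDerivAt_position t)

theorem hasDerivAt_mechanicalEnergy (t : ℝ) :
    HasDerivAt (fun s => mechanicalEnergy W (q s) (v s)) 0 t := by
  refine (((h.hasDerivAt_velocity t).norm_sq.div_const 2).fun_add
    (h.hasDerivAt_potential_comp t)).congr_deriv ?_
  rw [inner_neg_right, real_inner_comm]
  ring

theorem hasDerivAt_inner_position_velocity {t : ℝ} (hW : ⟪q t, ∇ W (q t)⟫ = -2 * W (q t)) :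
    HasDerivAt (fun s => ⟪q s, v s⟫) (2 * mechanicalEnergy W (q t) (v t)) t := by
  refine ((h.hasDerivAt_position t).inner ℝ (h.hasDerivAt_velocity t)).congr_deriv ?_
  rw [inner_neg_right, hW, real_inner_self_eq_norm_sq, mechanicalEnergy]
  ring

theorem hasDerivAt_dilationIntegral {t : ℝ} (hW : ⟪q t, ∇ W (q t)⟫ = -2 * W (q t)) :
    HasDerivAt (fun s => dilationIntegral W (q s) (v s) s) 0 t := by
  refine ((h.hasDerivAt_inner_position_velocity hW).fun_sub
    (((hasDerivAt_id' t).const_mul 2).fun_mul (h.hasDerivAt_mechanicalEnergy t))).congr_deriv ?_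
  ring

theorem hasDerivAt_conformalIntegral {t : ℝ} (hW : ⟪q t, ∇ W (q t)⟫ = -2 * W (q t)) :
    HasDerivAt (fun s => conformalIntegral W (q s) (v s) s) 0 t := by
  have h_virial := ((hasDerivAt_id' t).const_mul 2).fun_mul
    (h.hasDerivAt_inner_position_velocity hW)
  have h_energy := (((hasDerivAt_id' t).fun_pow 2).const_mul 2).fun_mul
    (h.hasDerivAt_mechanicalEnergy t)
  refine (((h.hasDerivAt_position t).norm_sq.fun_sub h_virial).fun_add h_energy).congr_deriv ?_
  push_cast
  ring

end

theorem hasDerivAt_velocity_add_smul {g : G} {x v : ℝ → G}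
    (h : IsNewtonianMotion_s15 (fun q => ⟪g, q⟫) x v) (t : ℝ) :
    HasDerivAt (fun s => v s + s • g) 0 t := by
  have h_gradient : ∇ (fun q => ⟪g, q⟫) (x t) = g :=
    (hasGradientAt_iff_hasFDerivAt.mpr (InnerProductSpace.toDual ℝ G g).hasFDerivAt).gradient
  have h_velocity := h.hasDerivAt_velocity t
  rw [h_gradient] at h_velocity
  simpa using h_velocity.fun_add ((hasDerivAt_id' t).smul_const g)

end IsNewtonianMotion_s15

theorem stmt_15_general {g : G} {W : F → ℝ} {x x' : ℝ → G} {y y' : ℝ → F} {J : ℝ → G}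
    (hx : IsNewtonianMotion_s15 (fun q => ⟪g, q⟫) x x') (hy : IsNewtonianMotion_s15 W y y')
    (hW : ∀ t, ⟪y t, ∇ W (y t)⟫ = -2 * W (y t))
    (hJ : ∀ t, J t = (-t * ‖y' t‖ ^ 2 + ⟪y t, y' t⟫ - 2 * W (y t) * t) • x' t +
      (‖y t‖ ^ 2 - t * ⟪y t, y' t⟫) • g) :
    ∀ t₁ t₂ : ℝ, J t₁ = J t₂ := by
  have h_split : J = fun t => dilationIntegral W (y t) (y' t) t • (x' t + t • g) +
      conformalIntegral W (y t) (y' t) t • g := by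
    funext t
    rw [hJ, dilationIntegral, conformalIntegral, mechanicalEnergy]
    module
  have h_deriv (t : ℝ) : HasDerivAt J 0 t := by
    rw [h_split]
    simpa using ((hy.hasDerivAt_dilationIntegral (hW t)).fun_smul
      (hx.hasDerivAt_velocity_add_smul t)).fun_add
      ((hy.hasDerivAt_conformalIntegral (hW t)).smul_const g)
  exact is_const_of_deriv_eq_zero (fun t => (h_deriv t).differentiableAt)
    fun t => (h_deriv t).deriv

end

theorem inner_gradient_const_div_sq (c : ℝ) {b : ℝ} (hb : b ≠ 0) :
    ⟪b, ∇ (fun y : ℝ => c / y ^ 2) b⟫ = -2 * (c / b ^ 2) := by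
  have h_deriv := (hasDerivAt_const b c).fun_div ((hasDerivAt_id' b).fun_pow 2) (pow_ne_zero 2 hb)
  rw [gradient_eq_deriv', h_deriv.deriv, Real.inner_apply]
  field_simp
  ring

theorem stmt_15 (c₂ c₃ : ℝ) (x y x' y' x'' y'' : ℝ → ℝ) (V : ℝ → ℝ → ℝ) (J : ℝ → ℝ)
    (hV : ∀ a b : ℝ, V a b = c₂ / b ^ 2 + c₃ * a)
    (hx : ∀ t, HasDerivAt x (x' t) t)
    (hy : ∀ t, HasDerivAt y (y' t) t)
    (hx' : ∀ t, HasDerivAt x' (x'' t) t)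
    (hy' : ∀ t, HasDerivAt y' (y'' t) t)
    (hyne : ∀ t, y t ≠ 0)
    (heqx : ∀ t, x'' t = - deriv (fun a => V a (y t)) (x t))
    (heqy : ∀ t, y'' t = - deriv (fun b => V (x t) b) (y t))
    (hJ : ∀ t, J t =
      -t * x' t * y' t ^ 2 + y t * x' t * y' t -
      (2 * c₂ / y t ^ 2) * t * x' t - c₃ * t * y t * y' t + c₃ * y t ^ 2) :
    ∀ t₁ t₂ : ℝ, J t₁ = J t₂ := by
  have hx_motion : IsNewtonianMotion_s15 (fun a => ⟪c₃, a⟫) x x' :=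
    .of_deriv (fun _ => (differentiableAt_const c₃).inner ℝ differentiableAt_id) hx hx' fun t => by
      simp [heqx, hV]
  have hy_motion : IsNewtonianMotion_s15 (fun b => c₂ / b ^ 2) y y' :=
    .of_deriv (fun t => by fun_prop (disch := exact pow_ne_zero 2 (hyne t))) hy hy' fun t => by
      simp only [heqy, hV, deriv_add_const]
  refine stmt_15_general hx_motion hy_motion
    (fun t => inner_gradient_const_div_sq c₂ (hyne t)) fun t => ?_
  simp only [hJ, Real.norm_eq_abs, sq_abs, Real.inner_apply, smul_eq_mul]
  ring
end

section
/- Let k be a real constant. Suppose x, y : ℝ → ℝ are twice differentiable with x(t) > 0 and y(t) > 0 for all t, and satisfy the Newtonian equations of motion for the potential V(x,y) = k(√x + √y). Then the time-dependent cubic function J(t) = t·(x'³ − y'³ + 3k·√x·x' − 3k·√y·y') − x·x'² + y·y'² − (8k/3)·x^{3/2} + (8k/3)·y^{3/2} is constant in t. -/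
/-!
The potential is separable, so each coordinate moves in one degree of freedom with potential
`k √q`, where `q'' = -k / (2 √q)`. Set `P = q'³ + 3k √q q'` and `Q = q q'² + (8k/3) q^(3/2)`.
Then `Q' = P`, while `P' = -3k²/2` no longer depends on the motion; hence
`(t P - Q)' = t P' = -(3k²/2) t`. This depends only on `k` and `t`, so it cancels in the
difference of the two coordinates; for couplings `k` and `ℓ` it cancels after weighting the
coordinates by `α` and `β` with `α k² = β ℓ²`.
-/

/-- The momentum-like function `v³ + 3k √q v` of the position `q` and velocity `v`; it changes at a
constant rate along the motions in the potential `k √q`. -/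
noncomputable def cubicMomentum (k q v : ℝ) : ℝ :=
  v ^ 3 + 3 * k * √q * v

/-- The function `q v² + (8k/3) q^(3/2)` of the position `q` and velocity `v`; its rate of change
along the motions in the potential `k √q` is `cubicMomentum k`. -/
noncomputable def cubicMoment (k q v : ℝ) : ℝ :=
  q * v ^ 2 + 8 * k / 3 * q ^ (3 / 2 : ℝ)

/-- The contribution of one degree of freedom, with position `q` and velocity `v` at time `t`, to
the time-dependent cubic first integral. -/
noncomputable def cubicCharge (k t q v : ℝ) : ℝ :=
  t * cubicMomentum k q v - cubicMoment k q v

theorem deriv_const_mul_sqrt (k : ℝ) {q : ℝ} (hq : q ≠ 0) :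
    deriv (fun a => k * √a) q = k / (2 * √q) := by
  rw [((Real.hasDerivAt_sqrt hq).const_mul k).deriv, mul_one_div]

theorem eq_of_hasDerivWithinAt_zero {𝕜 E : Type*} [RCLike 𝕜] [NormedAddCommGroup E]
    [NormedSpace 𝕜 E] {s : Set 𝕜} (hs : Convex ℝ s) {f : 𝕜 → E}
    (hf : ∀ z ∈ s, HasDerivWithinAt f 0 s z) {a b : 𝕜} (ha : a ∈ s) (hb : b ∈ s) : f a = f b := by
  have hle := hs.norm_image_sub_le_of_norm_hasDerivWithin_le hf (fun _ _ => norm_zero.le) hb ha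
  rwa [zero_mul, norm_le_zero_iff, sub_eq_zero] at hle

section OneDegreeOfFreedom

variable {k t : ℝ} {I : Set ℝ} {q v : ℝ → ℝ}

theorem hasDerivWithinAt_cubicMomentum (hq : HasDerivWithinAt q (v t) I t)
    (hv : HasDerivWithinAt v (-(k / (2 * √(q t)))) I t) (hpos : 0 < q t) :
    HasDerivWithinAt (fun s => cubicMomentum k (q s) (v s)) (-(3 * k ^ 2 / 2)) I t := by
  have hsqrt : HasDerivWithinAt (fun s => √(q s)) (v t / (2 * √(q t))) I t := hq.sqrt hpos.ne'
  have hsqrt_ne : √(q t) ≠ 0 := (Real.sqrt_pos.2 hpos).ne'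
  refine ((hv.fun_pow 3).fun_add ((hsqrt.const_mul (3 * k)).fun_mul hv)).congr_deriv ?_
  field_simp
  ring

theorem hasDerivWithinAt_cubicMoment (hq : HasDerivWithinAt q (v t) I t)
    (hv : HasDerivWithinAt v (-(k / (2 * √(q t)))) I t) (hpos : 0 < q t) :
    HasDerivWithinAt (fun s => cubicMoment k (q s) (v s)) (cubicMomentum k (q t) (v t)) I t := by
  have hrpow : HasDerivWithinAt (fun s => q s ^ (3 / 2 : ℝ)) (3 / 2 * √(q t) * v t) I t := by
    refine (hq.rpow_const (Or.inl hpos.ne')).congr_deriv ?_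
    rw [Real.sqrt_eq_rpow, show (3 / 2 - 1 : ℝ) = 1 / 2 by norm_num]
    ring
  have hforce : q t * (k / (2 * √(q t))) = k / 2 * √(q t) := by
    calc q t * (k / (2 * √(q t))) = k / 2 * (q t / √(q t)) := by ring
      _ = k / 2 * √(q t) := by rw [Real.div_sqrt]
  refine ((hq.fun_mul (hv.fun_pow 2)).fun_add (hrpow.const_mul (8 * k / 3))).congr_deriv ?_
  rw [cubicMomentum]
  linear_combination (-2 * v t) * hforce

theorem hasDerivWithinAt_cubicCharge (hq : HasDerivWithinAt q (v t) I t)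
    (hv : HasDerivWithinAt v (-(k / (2 * √(q t)))) I t) (hpos : 0 < q t) :
    HasDerivWithinAt (fun s => cubicCharge k s (q s) (v s)) (-(3 * k ^ 2 / 2) * t) I t := by
  have hP := hasDerivWithinAt_cubicMomentum hq hv hpos
  have hQ := hasDerivWithinAt_cubicMoment hq hv hpos
  refine (((hasDerivWithinAt_id t I).fun_mul hP).fun_sub hQ).congr_deriv ?_
  rw [id_eq]
  ring

end OneDegreeOfFreedom

theorem stmt_17_general {I : Set ℝ} (hI : Convex ℝ I) {k ℓ α β : ℝ} (hαβ : α * k ^ 2 = β * ℓ ^ 2)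
    {x y x' y' x'' y'' : ℝ → ℝ} {V : ℝ → ℝ → ℝ}
    (hV : ∀ a b, V a b = k * √a + ℓ * √b)
    (hx : ∀ t ∈ I, HasDerivWithinAt x (x' t) I t)
    (hy : ∀ t ∈ I, HasDerivWithinAt y (y' t) I t)
    (hx' : ∀ t ∈ I, HasDerivWithinAt x' (x'' t) I t)
    (hy' : ∀ t ∈ I, HasDerivWithinAt y' (y'' t) I t)
    (hxpos : ∀ t ∈ I, 0 < x t)
    (hypos : ∀ t ∈ I, 0 < y t)
    (heqx : ∀ t ∈ I, x'' t = -deriv (fun a => V a (y t)) (x t))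
    (heqy : ∀ t ∈ I, y'' t = -deriv (fun b => V (x t) b) (y t))
    {t₁ t₂ : ℝ} (ht₁ : t₁ ∈ I) (ht₂ : t₂ ∈ I) :
    α * cubicCharge k t₁ (x t₁) (x' t₁) - β * cubicCharge ℓ t₁ (y t₁) (y' t₁) =
      α * cubicCharge k t₂ (x t₂) (x' t₂) - β * cubicCharge ℓ t₂ (y t₂) (y' t₂) := by
  have hx'_force : ∀ t ∈ I, HasDerivWithinAt x' (-(k / (2 * √(x t)))) I t := fun t ht => by
    simpa only [heqx t ht, hV, deriv_add_const, deriv_const_mul_sqrt k (hxpos t ht).ne']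
      using hx' t ht
  have hy'_force : ∀ t ∈ I, HasDerivWithinAt y' (-(ℓ / (2 * √(y t)))) I t := fun t ht => by
    simpa only [heqy t ht, hV, deriv_const_add, deriv_const_mul_sqrt ℓ (hypos t ht).ne']
      using hy' t ht
  have hderiv : ∀ t ∈ I, HasDerivWithinAt
      (fun s => α * cubicCharge k s (x s) (x' s) - β * cubicCharge ℓ s (y s) (y' s)) 0 I t := by
    intro t ht
    have hX := hasDerivWithinAt_cubicCharge (hx t ht) (hx'_force t ht) (hxpos t ht)
    have hY := hasDerivWithinAt_cubicCharge (hy t ht) (hy'_force t ht) (hypos t ht)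
    refine ((hX.const_mul α).fun_sub (hY.const_mul β)).congr_deriv ?_
    linear_combination (-(3 / 2) * t) * hαβ
  exact eq_of_hasDerivWithinAt_zero hI hderiv ht₁ ht₂

theorem stmt_17 (k : ℝ) (x y x' y' x'' y'' : ℝ → ℝ) (V : ℝ → ℝ → ℝ) (J : ℝ → ℝ)
    (hV : ∀ a b : ℝ, V a b = k * (Real.sqrt a + Real.sqrt b))
    (hx : ∀ t, HasDerivAt x (x' t) t)
    (hy : ∀ t, HasDerivAt y (y' t) t)
    (hx' : ∀ t, HasDerivAt x' (x'' t) t)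
    (hy' : ∀ t, HasDerivAt y' (y'' t) t)
    (hxpos : ∀ t, 0 < x t)
    (hypos : ∀ t, 0 < y t)
    (heqx : ∀ t, x'' t = - deriv (fun a => V a (y t)) (x t))
    (heqy : ∀ t, y'' t = - deriv (fun b => V (x t) b) (y t))
    (hJ : ∀ t, J t =
      t * (x' t ^ 3 - y' t ^ 3 + 3 * k * Real.sqrt (x t) * x' t -
        3 * k * Real.sqrt (y t) * y' t) -
      x t * x' t ^ 2 + y t * y' t ^ 2 -
      (8 * k / 3) * x t ^ ((3 : ℝ) / 2) + (8 * k / 3) * y t ^ ((3 : ℝ) / 2)) :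
    ∀ t₁ t₂ : ℝ, J t₁ = J t₂ := by
  intro t₁ t₂
  have hJ_charge : ∀ t, J t = 1 * cubicCharge k t (x t) (x' t) - 1 * cubicCharge k t (y t) (y' t) :=
    fun t => by simp only [hJ, cubicCharge, cubicMomentum, cubicMoment]; ring
  rw [hJ_charge, hJ_charge]
  exact stmt_17_general convex_univ rfl (fun a b => (hV a b).trans (mul_add _ _ _))
    (fun t _ => (hx t).hasDerivWithinAt) (fun t _ => (hy t).hasDerivWithinAt)
    (fun t _ => (hx' t).hasDerivWithinAt) (fun t _ => (hy' t).hasDerivWithinAt)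
    (fun t _ => hxpos t) (fun t _ => hypos t) (fun t _ => heqx t) (fun t _ => heqy t)
    (Set.mem_univ t₁) (Set.mem_univ t₂)
end
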